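/- Let n and m be positive integers satisfying one of: (a) n = 1 and m ≠ 2; (b) n = 2 and 2 ≤ m and m ≠ 4; (c) 2 < n and n ≤ m. Then there exists a unimodal, locally eventually onto map f : [0,1] → [0,1] with critical point c such that ω(c) ≃ ω²·n + 1 and 𝓘 ≃ ω²·m + 1. -/

import Mathlib

/-!
The map is a tent map whose critical orbit is prescribed symbolically.

*Symbolic reduction.* Every binary sequence `w` without four consecutive zeros is, after the word
`1 0 0 0 0 0`, the itinerary of the critical value of a locally eventually onto tent map of slope
in `[5/3, 2]` (`exists_tent`). The slope is a zero of the kneading series; the long block of zeros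
makes all shifts of `w` admissible and the coding of the relevant points injective. Consequently,
if the symbols of a sequence over a finite alphabet are labelled by `0` and `1` so that limit
sequences are determined by their labels, then `ω(c)` is homeomorphic to the shift-limit set `X` of
that sequence and `𝓘` to the set `Bi X` of bi-infinite sequences all of whose right halves are in
`X` (`exists_unimodal`). By `exists_word`, `X` may be any closed set in which the right halves of
countably many bi-infinite sequences `e k`, each equal to a fixed periodic sequence outside a finite
block, are dense.

*Topology.* A countable compact totally disconnected Hausdorff space with `n ≥ 1` points of
Cantor–Bendixson rank two and no points of higher rank is determined by `n` (`CB.homeo`), so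
`ω² · n + 1` is recognised by inspecting finite windows (`homeoOrd_of_windows`).

*Equal multiplicities.* For `m = n`, take the periodic sequences of period `n` with at most two
flags, all at phase `0`. One-sided and two-sided such sequences both have the `n` unflagged
sequences as points of rank two (`exists_equal`).

*Different multiplicities.* For `m = n + l` with `l > 0`, take the paths in a graph made of a cycle
of length `n` and a cycle of length `l`, joined by one edge in each direction, that visit the second
cycle during one interval of time only. A one-sided path that stays in the second cycle is a limit
of paths that leave it, but such paths are isolated, so only the `n` paths in the first cycle have
rank two. For a two-sided path in the second cycle both the entrance and the exit may tend to
infinity, so that all `n + l` periodic paths have rank two. A binary labelling that determines the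
paths exists unless `n = l = 1` or `n = l = 2` (`exists_different`); these exceptions are
`(n, m) = (1, 2)` and `(2, 4)`.
-/

open Set Filter

noncomputable section

/-- The unit interval `[0,1]` as a subtype of `ℝ`. -/
abbrev unitI : Type := Set.Icc (0 : ℝ) 1

/-- `f : [0,1] → [0,1]` is unimodal with critical point `c`: continuous, `c ∈ (0,1)`,
strictly increasing on `[0,c]` and strictly decreasing on `[c,1]`. -/
def Unimodal (f : unitI → unitI) (c : unitI) : Prop :=
  Continuous f ∧ 0 < (c : ℝ) ∧ (c : ℝ) < 1 ∧
    StrictMonoOn f {x : unitI | x ≤ c} ∧ StrictAntiOn f {x : unitI | c ≤ x}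

/-- `f` is locally eventually onto: for every `ε > 0` and every `x`, some iterate of `f`
maps the `ε`-ball about `x` (in `[0,1]`) onto all of `[0,1]`. -/
def LEO (f : unitI → unitI) : Prop :=
  ∀ ε : ℝ, 0 < ε → ∀ x : unitI, ∃ N : ℕ, f^[N] '' Metric.ball x ε = Set.univ

/-- The omega-limit set of `c` under `f`: `⋂ₙ closure {fᵐ(c) : m ≥ n}`. -/
def omegaLimitSet (f : unitI → unitI) (c : unitI) : Set unitI :=
  ⋂ n : ℕ, closure {y : unitI | ∃ m : ℕ, n ≤ m ∧ f^[m] c = y}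

/-- The inverse limit of `f`, as a subset of the product `ℕ → [0,1]`
(the subspace topology coincides with the topology induced by the usual metric). -/
def InvLim (f : unitI → unitI) : Set (ℕ → unitI) :=
  {x | ∀ i : ℕ, f (x (i + 1)) = x i}

/-- The set of inhomogeneities: points of the inverse limit all of whose
coordinates lie in the postcritical omega-limit set. -/
def Inhom (f : unitI → unitI) (c : unitI) : Set (InvLim f) :=
  {x | ∀ n : ℕ, (x : ℕ → unitI) n ∈ omegaLimitSet f c}

/-- The ordinal space `{ξ : ξ ≤ o}` with its order topology. -/
def OrdSpace (o : Ordinal) : Type _ := Set.Iic o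

instance (o : Ordinal) : LinearOrder (OrdSpace o) :=
  inferInstanceAs (LinearOrder (Set.Iic o))

instance (o : Ordinal) : TopologicalSpace (OrdSpace o) := Preorder.topology (OrdSpace o)

instance (o : Ordinal) : OrderTopology (OrdSpace o) := ⟨rfl⟩

/-- `X ≃ ω^γ·k + 1` in the sense of the paper: `X` is homeomorphic to the
ordinal space `{ξ : ξ ≤ o}` with its order topology. -/
def HomeoOrd (X : Type*) [TopologicalSpace X] (o : Ordinal) : Prop :=
  Nonempty (X ≃ₜ OrdSpace o)

/-! ### Countable compact spaces of Cantor–Bendixson rank two -/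

/-- `P` and `Q` are the points of Cantor–Bendixson rank two and one of `K`, and all other points
are isolated. -/
structure CB (K : Type*) [TopologicalSpace K] (P Q : Set K) : Prop where
  disj : ∀ x ∈ P, x ∉ Q
  cover : ∀ x, x ∈ P ∨ x ∈ Q ∨ IsOpen {x}
  iso : ∀ x ∈ Q, ∃ U, IsOpen U ∧ x ∈ U ∧ ∀ y ∈ U, y ≠ x → IsOpen {y}
  non : ∀ x ∈ Q, ¬ IsOpen {x}
  acc : ∀ x ∈ P, ∀ U, IsOpen U → x ∈ U → ∃ y ∈ Q, y ∈ U

lemma isOpen_singleton_subtype {K : Type*} [TopologicalSpace K] {V : Set K} (hV : IsOpen V)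
    (x : V) : IsOpen ({x} : Set V) ↔ IsOpen ({(x : K)} : Set K) := by
  rw [hV.isOpenEmbedding_subtypeVal.isOpen_iff_image_isOpen, image_singleton]

lemma CB.restrict {K : Type*} [TopologicalSpace K] {P Q : Set K} (h : CB K P Q) {V : Set K}
    (hV : IsOpen V) : CB V (Subtype.val ⁻¹' P) (Subtype.val ⁻¹' Q) where
  disj x hx := h.disj x hx
  cover x := by
    rw [isOpen_singleton_subtype hV]
    exact h.cover x
  iso x hx := by
    obtain ⟨U, hU, hxU, hy⟩ := h.iso x hx
    refine ⟨Subtype.val ⁻¹' U, hU.preimage continuous_subtype_val, hxU, fun y hyU hyx => ?_⟩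
    rw [isOpen_singleton_subtype hV]
    exact hy y hyU (fun h => hyx (Subtype.ext h))
  non x hx := by
    rw [isOpen_singleton_subtype hV]
    exact h.non x hx
  acc x hx U hU hxU := by
    obtain ⟨y, hyQ, hyU⟩ := h.acc x hx _ (hV.isOpenEmbedding_subtypeVal.isOpenMap U hU)
      (mem_image_of_mem _ hxU)
    obtain ⟨y', hy', rfl⟩ := hyU
    exact ⟨y', hyQ, hy'⟩

/-- A countable compact Hausdorff space with exactly one non-isolated point is the one-point
compactification of `ℕ`. -/
lemma homeo_rank_one {K : Type*} [TopologicalSpace K] [CompactSpace K] [T2Space K] [Countable K]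
    (q : K) (h : ∀ y, y ≠ q → IsOpen {y}) (hq : ¬ IsOpen {q}) : Nonempty (K ≃ₜ OnePoint ℕ) := by
  have hinf : Infinite ({q}ᶜ : Set K) := by
    rw [Set.infinite_coe_iff]
    intro hfin
    exact hq (by simpa using hfin.isClosed.isOpen_compl)
  obtain ⟨e⟩ : Nonempty (ℕ ≃ ({q}ᶜ : Set K)) := by
    have := Classical.choice (nonempty_denumerable ({q}ᶜ : Set K))
    exact ⟨(Denumerable.eqv _).symm⟩
  have hop : IsOpen ({q}ᶜ : Set K) := isOpen_compl_singleton
  have hemb : Topology.IsEmbedding (fun n => (e n : K)) := by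
    refine (Topology.IsOpenEmbedding.of_continuous_injective_isOpenMap
      continuous_of_discreteTopology (Subtype.val_injective.comp e.injective) ?_).isEmbedding
    intro U _
    rw [← biUnion_of_singleton ((Subtype.val ∘ e) '' U)]
    refine isOpen_biUnion ?_
    rintro _ ⟨n, _, rfl⟩
    exact h _ (e n).2
  refine ⟨(OnePoint.equivOfIsEmbeddingOfRangeEq q _ hemb ?_).symm⟩
  ext x
  constructor
  · rintro ⟨n, rfl⟩
    exact (e n).2
  · intro hx
    exact ⟨e.symm ⟨x, hx⟩, by simp⟩

/-- A space is the disjoint sum of the fibres of a continuous map to a discrete space; if every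
fibre is homeomorphic to `M` then the space is a product. -/
lemma homeo_fibres {K I M : Type*} [TopologicalSpace K] [TopologicalSpace I] [DiscreteTopology I]
    [TopologicalSpace M] (r : K → I) (hr : Continuous r)
    (h : ∀ i, Nonempty ({x // r x = i} ≃ₜ M)) : Nonempty (K ≃ₜ I × M) := by
  let e := fun i => Classical.choice (h i)
  have hop : ∀ i, IsOpen {x | r x = i} := fun i => (isOpen_discrete {i}).preimage hr
  let E : K ≃ I × M :=
    { toFun := fun x => (r x, e (r x) ⟨x, rfl⟩)
      invFun := fun p => ((e p.1).symm p.2 : {x // r x = p.1})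
      left_inv := fun x => by simp
      right_inv := by
        rintro ⟨i, y⟩
        have key : ∀ (z : {x // r x = i}), (r z.1, e (r z.1) ⟨z.1, rfl⟩) = (i, e i z) := by
          rintro ⟨z, rfl⟩
          rfl
        simp [key] }
  have hcont : Continuous E.symm := by
    rw [continuous_iff_continuousAt]
    rintro ⟨i, y⟩
    have h1 : ContinuousAt (fun p : I × M => (((e i).symm p.2 : {x // r x = i}) : K)) (i, y) := by
      fun_prop
    refine h1.congr ?_
    have : {p : I × M | p.1 = i} ∈ nhds (i, y) :=
      ((isOpen_discrete {i}).preimage continuous_fst).mem_nhds rfl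
    filter_upwards [this] with p hp
    obtain ⟨p1, p2⟩ := p
    change p1 = i at hp
    subst hp
    rfl
  have hcont' : Continuous E := by
    rw [continuous_iff_continuousAt]
    intro x
    have hx : {z | r z = r x} ∈ nhds x := (hop (r x)).mem_nhds rfl
    refine ((hop (r x)).isOpenEmbedding_subtypeVal.continuousAt_iff
      (x := (⟨x, rfl⟩ : {z | r z = r x}))).1 ?_
    have : (E ∘ Subtype.val : {z | r z = r x} → I × M) = fun z => (r x, e (r x) z) := by
      funext ⟨z, hz⟩
      have key : ∀ i (z : {x // r x = i}), (r z.1, e (r z.1) ⟨z.1, rfl⟩) = (i, e i z) := by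
        rintro i ⟨z, rfl⟩
        rfl
      exact key (r x) ⟨z, hz⟩
    rw [this]
    exact (continuous_const.prodMk (e (r x)).continuous).continuousAt
  exact ⟨⟨E, hcont', hcont⟩⟩

/-- The rank-one points are enumerated as `q₀, q₁, …` and separated by clopen sets `Wᵢ`.
Sending a point to the least `i` with `x ∈ Wᵢ`, and each remaining isolated point to an arbitrary
index by an injective numbering, splits the complement of `p` into clopen sets containing exactly
one `qᵢ` each. -/
lemma CB.homeo_one {K : Type*} [TopologicalSpace K] [CompactSpace K] [T2Space K] [Countable K]
    [TotallyDisconnectedSpace K] {Q : Set K} (p : K) (h : CB K {p} Q) :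
    Nonempty (K ≃ₜ OnePoint (ℕ × OnePoint ℕ)) := by
  classical
  have hpQ : p ∉ Q := h.disj p rfl
  have hQinf : Infinite Q := by
    rw [Set.infinite_coe_iff]
    intro hfin
    obtain ⟨y, hy, hy'⟩ := h.acc p rfl Qᶜ hfin.isClosed.isOpen_compl hpQ
    exact hy' hy
  obtain ⟨q⟩ : Nonempty (ℕ ≃ Q) := by
    have := Classical.choice (nonempty_denumerable Q)
    exact ⟨(Denumerable.eqv _).symm⟩
  obtain ⟨num, hnum⟩ := exists_injective_nat K
  have hW : ∀ i, ∃ W : Set K, IsClopen W ∧ (q i : K) ∈ W ∧ p ∉ W ∧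
      ∀ y ∈ W, y ≠ q i → IsOpen {y} := by
    intro i
    obtain ⟨U, hU, hqU, hy⟩ := h.iso (q i) (q i).2
    obtain ⟨W, hWc, hqW, hWU⟩ := compact_exists_isClopen_in_isOpen
      (hU.inter (isOpen_compl_singleton (x := p)))
      ⟨hqU, fun hh => hpQ (by rw [← hh]; exact (q i).2)⟩
    exact ⟨W, hWc, hqW, fun hp => (hWU hp).2 rfl, fun y hyW => hy y (hWU hyW).1⟩
  choose W hWc hqW hpW hWiso using hW
  have hqW' : ∀ i j, (q i : K) ∈ W j → i = j := by
    intro i j hij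
    by_contra hne
    exact h.non _ (q i).2 (hWiso j _ hij
      (fun hh => hne (q.injective (Subtype.ext hh))))
  let r : K → ℕ := fun x => if hx : ∃ i, x ∈ W i then Nat.find hx else num x
  have hrq : ∀ i, r (q i) = i := by
    intro i
    have hx : ∃ j, (q i : K) ∈ W j := ⟨i, hqW i⟩
    simp only [r, dif_pos hx]
    exact (hqW' i _ (Nat.find_spec hx)).symm
  have hrloc : ∀ i, ∀ y ∈ W i ∩ ⋂ j ∈ Finset.range i, (W j)ᶜ, r y = i := by
    rintro i y ⟨hy, hy'⟩
    have hx : ∃ j, y ∈ W j := ⟨i, hy⟩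
    simp only [r, dif_pos hx]
    rw [Nat.find_eq_iff]
    refine ⟨hy, fun j hj hyj => ?_⟩
    simp only [mem_iInter, Finset.mem_range] at hy'
    exact hy' j hj hyj
  have hop : IsOpen ({p}ᶜ : Set K) := isOpen_compl_singleton
  have hfib : ∀ i, ∀ x, r x = i → x ≠ p → x ≠ q i → IsOpen {x} := by
    intro i x hx hxp hxq
    rcases h.cover x with h1 | h1 | h1
    · exact absurd h1 hxp
    · exfalso
      have : r x = q.symm ⟨x, h1⟩ := by
        have := hrq (q.symm ⟨x, h1⟩)
        simpa using this
      apply hxq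
      rw [← hx, this]
      simp
    · exact h1
  have hrc : ∀ x, x ≠ p → ContinuousAt r x := by
    intro x hxp
    by_cases hx : IsOpen {x}
    · have : nhds x = pure x := (isOpen_singleton_iff_nhds_eq_pure x).1 hx
      rw [ContinuousAt, this]
      exact tendsto_pure_nhds r x
    · have hxq : x = q (r x) := by
        by_contra hne
        exact hx (hfib _ x rfl hxp hne)
      have : W (r x) ∩ ⋂ j ∈ Finset.range (r x), (W j)ᶜ ∈ nhds x := by
        refine IsOpen.mem_nhds ?_ ⟨?_, ?_⟩
        · exact (hWc _).isOpen.inter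
            (isOpen_biInter_finset fun j _ => (hWc j).isClosed.isOpen_compl)
        · have := hqW (r x)
          rwa [← hxq] at this
        · simp only [mem_iInter, Finset.mem_range]
          intro j hj hxj
          rw [hxq] at hxj
          exact absurd (hqW' _ _ hxj) (by omega)
      refine continuousAt_const.congr (f := fun _ => r x) ?_
      filter_upwards [this] with y hy
      exact (hrloc _ y hy).symm
  let r' : ({p}ᶜ : Set K) → ℕ := fun x => r x
  have hr' : Continuous r' := by
    rw [continuous_iff_continuousAt]
    intro x
    exact (hrc x x.2).comp continuous_subtype_val.continuousAt
  -- A fibre is closed in `K`: it is `Wᵢ` minus the earlier `Wⱼ`, up to at most one further point.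
  have hfibclosed : ∀ i, IsClosed {x : K | x ≠ p ∧ r x = i} := by
    intro i
    have hset : {x : K | x ≠ p ∧ r x = i} =
        (W i ∩ ⋂ j ∈ Finset.range i, (W j)ᶜ) ∪
          {x : K | x ≠ p ∧ num x = i ∧ ∀ j, x ∉ W j} := by
      ext x
      constructor
      · rintro ⟨hxp, hx⟩
        by_cases hex : ∃ j, x ∈ W j
        · left
          simp only [r, dif_pos hex] at hx
          rw [Nat.find_eq_iff] at hx
          refine ⟨hx.1, ?_⟩
          simp only [mem_iInter, Finset.mem_range]
          exact fun j hj => hx.2 j hj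
        · right
          simp only [r, dif_neg hex] at hx
          push Not at hex
          exact ⟨hxp, hx, hex⟩
      · rintro (hx | ⟨hxp, hx, hex⟩)
        · exact ⟨fun hh => hpW i (hh ▸ hx.1), hrloc i x hx⟩
        · refine ⟨hxp, ?_⟩
          have : ¬ ∃ j, x ∈ W j := by
            push Not
            exact hex
          simp only [r, dif_neg this]
          exact hx
    rw [hset]
    refine IsClosed.union ((hWc i).isClosed.inter (isClosed_biInter fun j _ =>
      (hWc j).isOpen.isClosed_compl)) (Set.Subsingleton.isClosed ?_)
    rintro x ⟨_, hx, _⟩ y ⟨_, hy, _⟩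
    exact hnum (hx.trans hy.symm)
  have hfibres : ∀ i, Nonempty ({x : ({p}ᶜ : Set K) // r' x = i} ≃ₜ OnePoint ℕ) := by
    intro i
    have hopi : IsOpen {x : ({p}ᶜ : Set K) | r' x = i} := (isOpen_discrete {i}).preimage hr'
    have hcomp : CompactSpace {x : ({p}ᶜ : Set K) // r' x = i} := by
      have h2 : IsCompact {x : ({p}ᶜ : Set K) | r' x = i} := by
        rw [Subtype.isCompact_iff]
        have : (Subtype.val '' {x : ({p}ᶜ : Set K) | r' x = i}) = {x : K | x ≠ p ∧ r x = i} := by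
          ext x
          simp [r', and_comm]
        rw [this]
        exact (hfibclosed i).isCompact
      exact isCompact_iff_compactSpace.1 h2
    have hqp : (q i : K) ∈ ({p}ᶜ : Set K) := fun hh => hpQ (by rw [← hh]; exact (q i).2)
    refine homeo_rank_one ⟨⟨q i, hqp⟩, hrq i⟩ ?_ ?_
    · rintro ⟨⟨y, hy⟩, hyi⟩ hne
      have := (isOpen_singleton_subtype hopi ⟨⟨y, hy⟩, hyi⟩)
      refine this.2 ((isOpen_singleton_subtype hop _).2 (hfib i y hyi hy ?_))
      rintro rfl
      exact hne rfl
    · intro ho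
      exact h.non _ (q i).2 ((isOpen_singleton_subtype hop ⟨q i, hqp⟩).1
        ((isOpen_singleton_subtype hopi ⟨⟨q i, hqp⟩, hrq i⟩).1 ho))
  obtain ⟨e⟩ := homeo_fibres r' hr' hfibres
  have e2 : OnePoint ({p}ᶜ : Set K) ≃ₜ K :=
    OnePoint.equivOfIsEmbeddingOfRangeEq p Subtype.val Topology.IsEmbedding.subtypeVal
      Subtype.range_coe
  exact ⟨e2.symm.trans e.onePointCongr⟩

/-- Classification: cutting a space with `n` points of rank two into `n` clopen pieces with one such
point each reduces to `CB.homeo_one`. -/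
lemma CB.homeo {K : Type*} [TopologicalSpace K] [CompactSpace K] [T2Space K] [Countable K]
    [TotallyDisconnectedSpace K] {Q : Set K} {n : ℕ} (hn : 0 < n) (p : Fin n → K)
    (hp : Function.Injective p) (h : CB K (range p) Q) :
    Nonempty (K ≃ₜ Fin n × OnePoint (ℕ × OnePoint ℕ)) := by
  classical
  have : NeZero n := ⟨hn.ne'⟩
  have hU : ∀ i, ∃ U : Set K, IsClopen U ∧ p i ∈ U ∧ ∀ j, p j ∈ U → j = i := by
    intro i
    have hfin : (p '' {i}ᶜ).Finite := Set.toFinite _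
    obtain ⟨U, hU, hpU, hUs⟩ := compact_exists_isClopen_in_isOpen (x := p i)
      hfin.isClosed.isOpen_compl (by rintro ⟨j, hj, hji⟩; exact hj (hp hji))
    refine ⟨U, hU, hpU, fun j hj => ?_⟩
    by_contra hne
    exact hUs hj ⟨j, hne, rfl⟩
  choose U hUc hpU hUj using hU
  have hr : ∃ r : K → Fin n, Continuous r ∧ ∀ i, r (p i) = i := by
    let r : K → Fin n := fun x =>
      if hx : (Finset.univ.filter fun i => x ∈ U i).Nonempty then
        (Finset.univ.filter fun i => x ∈ U i).min' hx else 0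
    refine ⟨r, ?_, ?_⟩
    · rw [continuous_iff_continuousAt]
      intro x
      have hev : ∀ᶠ y in nhds x, ∀ i, (y ∈ U i ↔ x ∈ U i) := by
        rw [eventually_all]
        intro i
        by_cases hx : x ∈ U i
        · filter_upwards [(hUc i).isOpen.mem_nhds hx] with y hy
          simp [hx, hy]
        · filter_upwards [(hUc i).isClosed.isOpen_compl.mem_nhds hx] with y hy
          exact ⟨fun h => absurd h hy, fun h => absurd h hx⟩
      refine continuousAt_const.congr (f := fun _ => r x) ?_
      filter_upwards [hev] with y hy
      simp only [r, hy]
    · intro i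
      have : (Finset.univ.filter fun j => p i ∈ U j) = {i} := by
        ext j
        simp only [Finset.mem_filter, Finset.mem_univ, true_and, Finset.mem_singleton]
        exact ⟨fun hh => (hUj j i hh).symm, fun hh => hh ▸ hpU i⟩
      simp [r, this]
  obtain ⟨r, hrc, hrp⟩ := hr
  refine homeo_fibres r hrc fun i => ?_
  have hop : IsOpen {x | r x = i} := (isOpen_discrete {i}).preimage hrc
  have hcl : IsClosed {x | r x = i} := (isClosed_discrete {i}).preimage hrc
  have : CompactSpace {x | r x = i} := isCompact_iff_compactSpace.1 hcl.isCompact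
  have h1 := h.restrict hop
  have hpre : (Subtype.val ⁻¹' range p : Set {x | r x = i}) = {⟨p i, hrp i⟩} := by
    ext ⟨x, hx⟩
    simp only [mem_preimage, mem_range, mem_singleton_iff, Subtype.mk.injEq]
    constructor
    · rintro ⟨j, rfl⟩
      have hx : r (p j) = i := hx
      rw [hrp] at hx
      rw [hx]
    · rintro rfl
      exact ⟨i, rfl⟩
  rw [hpre] at h1
  exact h1.homeo_one

/-! ### The ordinal space `ω² · n + 1` -/

universe u v

open Ordinal in
lemma omega_sq_eq : (ω : Ordinal.{u}) ^ (2 : Ordinal.{u}) = ω * ω := by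
  have : (2 : Ordinal.{u}) = ((2 : ℕ) : Ordinal.{u}) := by norm_num
  rw [this, opow_natCast, pow_two]

open Ordinal in
lemma isSuccLimit_omega0_mul {a : Ordinal} (ha : a ≠ 0) : Order.IsSuccLimit (ω * a) := by
  rw [Ordinal.isSuccLimit_iff, Ordinal.isSuccPrelimit_iff_omega0_dvd]
  exact ⟨mul_ne_zero omega0_ne_zero ha, dvd_mul_right _ _⟩

open Ordinal in
lemma omega_sq_mul_le {n : ℕ} (i : Fin n) :
    ω ^ (2 : Ordinal) * (((i : ℕ) + 1 : ℕ) : Ordinal) ≤ ω ^ (2 : Ordinal) * (n : Ordinal) := by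
  have h : (((i : ℕ) + 1 : ℕ) : Ordinal) ≤ (n : Ordinal) := by
    exact_mod_cast Nat.succ_le_of_lt i.2
  gcongr

open Ordinal in
/-- The rank-two points are `ω² · (i + 1)` and the rank-one points are `ω · (y + 1)`. -/
lemma cb_ordinal (n : ℕ) :
    CB (Set.Iic (ω ^ (2 : Ordinal.{u}) * n))
      (range fun i : Fin n => (⟨ω ^ (2 : Ordinal) * ((i : ℕ) + 1 : ℕ),
        omega_sq_mul_le i⟩ : Set.Iic (ω ^ (2 : Ordinal.{u}) * n)))
      {x | ∃ y, (x : Ordinal) = ω * Order.succ y} := by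
  have hsq := omega_sq_eq.{u}
  have hop : IsOpen (Set.Iic (ω ^ (2 : Ordinal.{u}) * (n : Ordinal))) := by
    rw [← Order.Iio_succ]
    exact isOpen_Iio
  have hiso : ∀ x : Set.Iic (ω ^ (2 : Ordinal.{u}) * (n : Ordinal)),
      IsOpen {x} ↔ ¬ Order.IsSuccLimit (x : Ordinal) := by
    intro x
    rw [isOpen_singleton_subtype hop, SuccOrder.isOpen_singleton_iff]
  refine ⟨?_, ?_, ?_, ?_, ?_⟩
  · rintro _ ⟨i, rfl⟩ ⟨y, hy⟩
    change ω ^ (2 : Ordinal.{u}) * (((i : ℕ) + 1 : ℕ) : Ordinal) = _ at hy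
    rw [hsq, mul_assoc] at hy
    have h1 := mul_left_cancel₀ omega0_ne_zero hy
    have h2 : Order.IsSuccLimit (ω * (((i : ℕ) + 1 : ℕ) : Ordinal)) :=
      isSuccLimit_omega0_mul (Nat.cast_ne_zero.2 (Nat.succ_ne_zero _))
    rw [h1] at h2
    exact Order.not_isSuccLimit_succ y h2
  · rintro ⟨x, hx⟩
    by_cases hl : Order.IsSuccLimit x
    · have hl' := hl
      rw [Ordinal.isSuccLimit_iff, Ordinal.isSuccPrelimit_iff_omega0_dvd] at hl
      obtain ⟨hx0, y, rfl⟩ := hl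
      have hy0 : y ≠ 0 := by
        rintro rfl
        simp at hx0
      rcases Ordinal.zero_or_succ_or_isSuccLimit y with h | ⟨z, rfl⟩ | h
      · exact absurd h hy0
      · exact Or.inr (Or.inl ⟨z, rfl⟩)
      · left
        rw [Ordinal.isSuccLimit_iff, Ordinal.isSuccPrelimit_iff_omega0_dvd] at h
        obtain ⟨_, z, rfl⟩ := h
        have hx' : ω * (ω * z) ≤ ω ^ (2 : Ordinal) * (n : Ordinal) := hx
        have hz : z ≤ n := by
          rw [← mul_assoc, ← hsq] at hx'
          exact le_of_mul_le_mul_left hx' (opow_pos _ omega0_pos)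
        obtain ⟨k, rfl⟩ : ∃ k : ℕ, z = k := Ordinal.lt_omega0.1 (hz.trans_lt (natCast_lt_omega0 n))
        have hk : k ≠ 0 := by
          rintro rfl
          simp at hx0
        have hkn : k ≤ n := by exact_mod_cast hz
        refine ⟨⟨k - 1, by omega⟩, ?_⟩
        apply Subtype.ext
        simp only [hsq, mul_assoc]
        rw [Nat.sub_add_cancel (by omega)]
    · exact Or.inr (Or.inr ((hiso _).2 hl))
  · rintro ⟨x, hx⟩ ⟨y, rfl : x = _⟩
    refine ⟨Subtype.val ⁻¹' (Set.Ioo (ω * y) (Order.succ (ω * Order.succ y))),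
      isOpen_Ioo.preimage continuous_subtype_val, ?_, ?_⟩
    · refine ⟨?_, Order.lt_succ _⟩
      exact (mul_lt_mul_iff_right₀ omega0_pos).2 (Order.lt_succ y)
    · rintro ⟨z, hz⟩ ⟨hz1, hz2⟩ hne
      rw [hiso]
      intro hl
      rw [Ordinal.isSuccLimit_iff, Ordinal.isSuccPrelimit_iff_omega0_dvd] at hl
      obtain ⟨_, t, rfl⟩ := hl
      simp only at hz1 hz2
      rw [Order.lt_succ_iff] at hz2
      have h1 : y < t := (mul_lt_mul_iff_right₀ omega0_pos).1 hz1
      have h2 : t ≤ Order.succ y := le_of_mul_le_mul_left hz2 omega0_pos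
      have : t = Order.succ y := le_antisymm h2 (Order.succ_le_of_lt h1)
      exact hne (Subtype.ext (by simp [this]))
  · rintro ⟨x, hx⟩ ⟨y, rfl : x = _⟩
    rw [hiso, not_not]
    exact isSuccLimit_omega0_mul (Order.succ_ne_bot y)
  · rintro _ ⟨i, rfl⟩ U hU hiU
    have hlim : Order.IsSuccLimit (ω * (((i : ℕ) + 1 : ℕ) : Ordinal)) :=
      isSuccLimit_omega0_mul (Nat.cast_ne_zero.2 (Nat.succ_ne_zero _))
    have himg := hop.isOpenEmbedding_subtypeVal.isOpenMap U hU
    rw [SuccOrder.isOpen_iff] at himg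
    obtain ⟨a, ha, haU⟩ := himg _ (mem_image_of_mem _ hiU) (by
      simp only [hsq, mul_assoc]
      exact isSuccLimit_omega0_mul hlim.ne_bot)
    simp only [hsq, mul_assoc] at ha haU
    obtain ⟨y, hy, hay⟩ := (Ordinal.lt_mul_iff_of_isSuccLimit hlim).1 ha
    have hmem := @haU (ω * Order.succ y) ⟨hay.trans
      ((mul_lt_mul_iff_right₀ omega0_pos).2 (Order.lt_succ y)),
      (mul_lt_mul_iff_right₀ omega0_pos).2 (hlim.succ_lt hy)⟩
    obtain ⟨z, hz, hz'⟩ := hmem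
    exact ⟨z, ⟨y, hz'⟩, hz⟩

open Ordinal in
lemma countable_Iic_omega_sq (n : ℕ) : Countable (Set.Iic (ω ^ (2 : Ordinal.{u}) * (n : Ordinal))) := by
  have hsq := omega_sq_eq.{u}
  have hsub : Set.Iic (ω ^ (2 : Ordinal.{u}) * (n : Ordinal)) ⊆
      range fun t : ℕ × ℕ × ℕ => ω ^ (2 : Ordinal) * (t.1 : Ordinal) + (ω * t.2.1 + t.2.2) := by
    intro x hx
    have hx : x < ω ^ (2 : Ordinal) * ((n + 1 : ℕ) : Ordinal) := by
      refine lt_of_le_of_lt hx ?_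
      rw [mul_lt_mul_iff_right₀ (opow_pos _ omega0_pos)]
      exact_mod_cast n.lt_succ_self
    obtain ⟨a, ha, r, hr, rfl⟩ := Ordinal.lt_mul_iff.1 hx
    rw [hsq] at hr
    obtain ⟨b, hb, c, hc, rfl⟩ := Ordinal.lt_mul_iff.1 hr
    obtain ⟨a, rfl⟩ := Ordinal.lt_omega0.1 (ha.trans (natCast_lt_omega0 _))
    obtain ⟨b, rfl⟩ := Ordinal.lt_omega0.1 hb
    obtain ⟨c, rfl⟩ := Ordinal.lt_omega0.1 hc
    exact ⟨(a, b, c), rfl⟩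
  exact (Set.countable_range _).mono hsub

lemma ordinal_totallySeparated (o : Ordinal) : TotallyDisconnectedSpace (Set.Iic o) := by
  have : TotallySeparatedSpace (Set.Iic o) := by
    rw [totallySeparatedSpace_iff_exists_isClopen]
    have key : ∀ a : Ordinal, IsClopen {x : Set.Iic o | (x : Ordinal) ≤ a} := by
      intro a
      constructor
      · exact isClosed_Iic.preimage continuous_subtype_val
      · have : {x : Set.Iic o | (x : Ordinal) ≤ a} = Subtype.val ⁻¹' (Set.Iio (Order.succ a)) := by
          ext x
          simp
        rw [this]
        exact isOpen_Iio.preimage continuous_subtype_val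
    intro x y hxy
    rcases lt_or_gt_of_ne hxy with h | h
    · exact ⟨_, key x, le_refl (x : Ordinal), fun hh => not_lt.2 hh h⟩
    · exact ⟨_, (key y).compl, fun hh => not_lt.2 hh h, by simp⟩
  infer_instance

open Ordinal in
lemma ordinal_model (n : ℕ) (hn : 0 < n) :
    Nonempty (OrdSpace (ω ^ (2 : Ordinal.{u}) * (n : Ordinal)) ≃ₜ
      Fin n × OnePoint (ℕ × OnePoint ℕ)) := by
  have := countable_Iic_omega_sq n
  have := ordinal_totallySeparated (ω ^ (2 : Ordinal.{u}) * (n : Ordinal))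
  have : CompactSpace (Set.Iic (ω ^ (2 : Ordinal.{u}) * (n : Ordinal))) := by
    rw [← isCompact_iff_compactSpace, ← Set.Icc_bot]
    exact isCompact_Icc
  obtain ⟨e⟩ := (cb_ordinal n).homeo hn _ (by
    intro i j hij
    have := mul_left_cancel₀ (opow_pos _ omega0_pos).ne' (congrArg Subtype.val hij)
    have h2 : (i : ℕ) + 1 = j + 1 := by exact_mod_cast this
    exact Fin.ext (by omega))
  have e2 : OrdSpace (ω ^ (2 : Ordinal.{u}) * (n : Ordinal)) ≃o
    Set.Iic (ω ^ (2 : Ordinal.{u}) * (n : Ordinal)) := OrderIso.refl _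
  exact ⟨e2.toHomeomorph.trans e⟩

/-! ### Recognising `ω² · n + 1` among closed sets of sequences -/

lemma exists_finset_window {J S : Type*} [TopologicalSpace S] [DiscreteTopology S]
    {U : Set (J → S)} (hU : IsOpen U) {x : J → S} (hx : x ∈ U) :
    ∃ F : Finset J, ∀ y : J → S, (∀ t ∈ F, y t = x t) → y ∈ U := by
  obtain ⟨F, u, hu, hsub⟩ := isOpen_pi_iff.1 hU x hx
  refine ⟨F, fun y hy => hsub ?_⟩
  intro t ht
  rw [hy t ht]
  exact (hu t ht).2

lemma isOpen_window {J S : Type*} [TopologicalSpace S] [DiscreteTopology S] (F : Finset J)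
    (x : J → S) : IsOpen {y : J → S | ∀ t ∈ F, y t = x t} := by
  have : {y : J → S | ∀ t ∈ F, y t = x t} = ⋂ t ∈ F, (fun y : J → S => y t) ⁻¹' {x t} := by
    ext y
    simp
  rw [this]
  exact isOpen_biInter_finset fun t _ => (isOpen_discrete _).preimage (continuous_apply t)

/-- `x` is the only element of `K` with a suitable finite window. -/
def WIso {J S : Type*} (K : Set (J → S)) (x : J → S) : Prop :=
  ∃ F : Finset J, ∀ y ∈ K, (∀ t ∈ F, y t = x t) → y = x

/-- Recognition of `ω² · n + 1` by finite windows: `p` lists the points of rank two, `Q` is the set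
of points of rank one. -/
theorem homeoOrd_of_windows {J S τ : Type*} [Countable J] [TopologicalSpace S] [DiscreteTopology S]
    [Finite S] [Fintype τ] [Nonempty τ] (K : Set (J → S)) (hK : IsClosed K) (p : τ → J → S)
    (hpK : ∀ i, p i ∈ K) (hp : Function.Injective p) (Q : Set (J → S)) (hQK : Q ⊆ K)
    (hpQ : ∀ i, p i ∉ Q)
    (hcover : ∀ x ∈ K, x ∈ range p ∨ x ∈ Q ∨ WIso K x)
    (hiso : ∀ x ∈ Q, ∃ F : Finset J, ∀ y ∈ K, (∀ t ∈ F, y t = x t) → y = x ∨ WIso K y)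
    (hnon : ∀ x ∈ Q, ∀ F : Finset J, ∃ y ∈ K, y ≠ x ∧ ∀ t ∈ F, y t = x t)
    (hacc : ∀ i, ∀ F : Finset J, ∃ y ∈ Q, ∀ t ∈ F, y t = p i t) :
    HomeoOrd K (Ordinal.omega0 ^ (2 : Ordinal) * (Fintype.card τ : ℕ)) := by
  have hcomp : CompactSpace K := isCompact_iff_compactSpace.1 hK.isCompact
  have hW : ∀ x : K, WIso K x ↔ IsOpen ({x} : Set K) := by
    rintro ⟨x, hx⟩
    constructor
    · rintro ⟨F, hF⟩
      have : ({⟨x, hx⟩} : Set K) = Subtype.val ⁻¹' {y : J → S | ∀ t ∈ F, y t = x t} := by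
        ext ⟨y, hy⟩
        simp only [mem_singleton_iff, Subtype.mk.injEq, mem_preimage, mem_ofPred_eq]
        exact ⟨fun h t _ => by rw [h], hF y hy⟩
      rw [this]
      exact (isOpen_window F x).preimage continuous_subtype_val
    · intro ho
      obtain ⟨U, hU, hUx⟩ := isOpen_induced_iff.1 ho
      have hxU : x ∈ U := by
        have : (⟨x, hx⟩ : K) ∈ Subtype.val ⁻¹' U := by rw [hUx]; rfl
        exact this
      obtain ⟨F, hF⟩ := exists_finset_window hU hxU
      refine ⟨F, fun y hy hyF => ?_⟩
      have : (⟨y, hy⟩ : K) ∈ ({⟨x, hx⟩} : Set K) := by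
        rw [← hUx]
        exact hF y hyF
      simpa using this
  let e := Fintype.equivFin τ
  let p' : Fin (Fintype.card τ) → K := fun i => ⟨p (e.symm i), hpK _⟩
  have hcb : CB K (range p') (Subtype.val ⁻¹' Q) := by
    refine ⟨?_, ?_, ?_, ?_, ?_⟩
    · rintro _ ⟨i, rfl⟩
      exact hpQ _
    · rintro ⟨x, hx⟩
      rcases hcover x hx with ⟨i, rfl⟩ | h | h
      · exact Or.inl ⟨e i, by simp [p']⟩
      · exact Or.inr (Or.inl h)
      · exact Or.inr (Or.inr ((hW _).1 h))
    · rintro ⟨x, hx⟩ hxQ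
      obtain ⟨F, hF⟩ := hiso x hxQ
      refine ⟨Subtype.val ⁻¹' {y : J → S | ∀ t ∈ F, y t = x t},
        (isOpen_window F x).preimage continuous_subtype_val, fun _ _ => rfl, ?_⟩
      rintro ⟨y, hy⟩ hyF hne
      refine (hW _).1 ((hF y hy hyF).resolve_left ?_)
      rintro rfl
      exact hne rfl
    · rintro ⟨x, hx⟩ hxQ ho
      obtain ⟨F, hF⟩ := (hW _).2 ho
      obtain ⟨y, hy, hne, hyF⟩ := hnon x hxQ F
      exact hne (hF y hy hyF)
    · rintro _ ⟨i, rfl⟩ U hU hiU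
      obtain ⟨V, hV, rfl⟩ := isOpen_induced_iff.1 hU
      obtain ⟨F, hF⟩ := exists_finset_window hV hiU
      obtain ⟨y, hy, hyF⟩ := hacc (e.symm i) F
      exact ⟨⟨y, hQK hy⟩, hy, hF y hyF⟩
  have hcount : Countable K := by
    have hQc : (Subtype.val ⁻¹' Q : Set K).Countable := by
      -- the points of `Q` are isolated in `Q`
      have : DiscreteTopology (Subtype.val ⁻¹' Q : Set K) := by
        rw [discreteTopology_iff_isOpen_singleton]
        rintro ⟨x, hx⟩
        obtain ⟨U, hU, hxU, hy⟩ := hcb.iso x hx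
        refine isOpen_induced_iff.2 ⟨U, hU, ?_⟩
        ext ⟨y, hyQ⟩
        simp only [mem_preimage, mem_singleton_iff, Subtype.mk.injEq]
        constructor
        · intro hyU
          by_contra hne
          exact hcb.non y hyQ (hy y hyU hne)
        · rintro rfl
          exact hxU
      exact Set.countable_coe_iff.1 (TopologicalSpace.separableSpace_iff_countable.1 inferInstance)
    have hIc : {x : K | IsOpen {x}}.Countable := by
      obtain ⟨D, hD, hD'⟩ := TopologicalSpace.exists_countable_dense K
      refine hD.mono fun x hx => ?_
      obtain ⟨y, hy, hyD⟩ := hD'.inter_open_nonempty {x} hx ⟨x, rfl⟩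
      rwa [← show y = x from hy]
    have : (Set.univ : Set K) ⊆ range p' ∪ (Subtype.val ⁻¹' Q ∪ {x : K | IsOpen {x}}) :=
      fun x _ => hcb.cover x
    exact Set.countable_univ_iff.1
      (((Set.countable_range p').union (hQc.union hIc)).mono this)
  obtain ⟨e1⟩ := hcb.homeo Fintype.card_pos p' (by
    intro i j hij
    have := hp (congrArg Subtype.val hij)
    exact e.symm.injective this)
  obtain ⟨e2⟩ := ordinal_model (Fintype.card τ) Fintype.card_pos
  exact ⟨e1.trans e2.symm⟩

/-! ### Tent maps -/

/-- The turning point `1 - 1/s` of the tent map of slope `s`. -/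
def tentC (s : ℝ) : ℝ := 1 - s⁻¹

/-- The tent map `x ↦ 1 - s|x - (1 - 1/s)|`, normalised so that the turning point is mapped
to `1` and `1` is mapped to `0`. -/
def tentR (s x : ℝ) : ℝ := 1 - s * |x - tentC s|

lemma mul_tentC {s : ℝ} (hs : 0 < s) : s * tentC s = s - 1 := by
  unfold tentC
  field_simp

lemma tentR_left {s x : ℝ} (hs : 0 < s) (hx : x ≤ tentC s) : tentR s x = 2 - s + s * x := by
  unfold tentR
  rw [abs_of_nonpos (by linarith)]
  have := mul_tentC hs
  linarith

lemma tentR_right {s x : ℝ} (hs : 0 < s) (hx : tentC s ≤ x) : tentR s x = s - s * x := by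
  unfold tentR
  rw [abs_of_nonneg (by linarith)]
  have := mul_tentC hs
  linarith

lemma tentR_mem {s x : ℝ} (hs : 5 / 3 ≤ s) (hs2 : s ≤ 2) (hx : x ∈ Icc (0 : ℝ) 1) :
    tentR s x ∈ Icc (0 : ℝ) 1 := by
  have hc := mul_tentC (show 0 < s by linarith)
  obtain ⟨h0, h1⟩ := hx
  rcases le_total x (tentC s) with h | h
  · rw [tentR_left (by linarith) h]
    constructor <;> nlinarith
  · rw [tentR_right (by linarith) h]
    constructor <;> nlinarith

/-- The tent map as a self-map of the unit interval. -/
def tent (s : ℝ) (hs : 5 / 3 ≤ s) (hs2 : s ≤ 2) : unitI → unitI :=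
  fun x => ⟨tentR s x, tentR_mem hs hs2 x.2⟩

lemma tentC_mem {s : ℝ} (hs : 5 / 3 ≤ s) (_hs2 : s ≤ 2) : 0 < tentC s ∧ tentC s < 1 := by
  have hc := mul_tentC (show 0 < s by linarith)
  constructor <;> nlinarith

/-- The turning point as an element of the unit interval. -/
def tentCI (s : ℝ) (hs : 5 / 3 ≤ s) (hs2 : s ≤ 2) : unitI :=
  ⟨tentC s, (tentC_mem hs hs2).1.le, (tentC_mem hs hs2).2.le⟩

lemma tent_unimodal (s : ℝ) (hs : 5 / 3 ≤ s) (hs2 : s ≤ 2) :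
    Unimodal (tent s hs hs2) (tentCI s hs hs2) := by
  have hs0 : 0 < s := by linarith
  refine ⟨?_, (tentC_mem hs hs2).1, (tentC_mem hs hs2).2, ?_, ?_⟩
  · refine Continuous.subtype_mk ?_ _
    unfold tentR
    fun_prop
  · intro x hx y hy hxy
    change tentR s x < tentR s y
    have hxy' : (x : ℝ) < y := hxy
    rw [tentR_left hs0 hx, tentR_left hs0 hy]
    nlinarith
  · intro x hx y hy hxy
    change tentR s y < tentR s x
    have hxy' : (x : ℝ) < y := hxy
    rw [tentR_right hs0 hx, tentR_right hs0 hy]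
    nlinarith

/-- Some iterate of `f` maps `[a,b]` onto the whole interval. -/
def EvOnto (f : unitI → unitI) (a b : ℝ) : Prop :=
  ∃ N : ℕ, ∀ z : unitI, ∃ x : unitI, (x : ℝ) ∈ Icc a b ∧ f^[N] x = z

/-- `f` maps `[a,b]` onto a set containing `[a',b']`. -/
def Covers (f : unitI → unitI) (a b a' b' : ℝ) : Prop :=
  ∀ z : unitI, (z : ℝ) ∈ Icc a' b' → ∃ x : unitI, (x : ℝ) ∈ Icc a b ∧ f x = z

lemma Covers.evOnto {f : unitI → unitI} {a b a' b' : ℝ} (h : Covers f a b a' b')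
    (h' : EvOnto f a' b') : EvOnto f a b := by
  obtain ⟨N, hN⟩ := h'
  refine ⟨N + 1, fun z => ?_⟩
  obtain ⟨y, hy, rfl⟩ := hN z
  obtain ⟨x, hx, rfl⟩ := h y hy
  exact ⟨x, hx, rfl⟩

section LEO
variable {s : ℝ} (hs : 5 / 3 ≤ s) (hs2 : s ≤ 2)

lemma covers_left {a b : ℝ} (ha : 0 ≤ a) (hab : a ≤ b) (hb : b ≤ tentC s) :
    Covers (tent s hs hs2) a b (tentR s a) (tentR s b) := by
  have hs0 : 0 < s := by linarith
  have hc := mul_tentC hs0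
  rintro z ⟨h1, h2⟩
  rw [tentR_left hs0 (by linarith)] at h1
  rw [tentR_left hs0 hb] at h2
  have hx : s * (((z : ℝ) - 2 + s) / s) = z - 2 + s := by field_simp
  have h3 : a ≤ ((z : ℝ) - 2 + s) / s := by rw [le_div_iff₀ hs0]; linarith
  have h4 : ((z : ℝ) - 2 + s) / s ≤ b := by rw [div_le_iff₀ hs0]; linarith
  have := (tentC_mem hs hs2).2
  refine ⟨⟨((z : ℝ) - 2 + s) / s, by linarith, by linarith⟩, ⟨h3, h4⟩, Subtype.ext ?_⟩
  change tentR s (((z : ℝ) - 2 + s) / s) = z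
  rw [tentR_left hs0 (by linarith), hx]
  ring

lemma covers_right {a b : ℝ} (ha : tentC s ≤ a) (hab : a ≤ b) (hb : b ≤ 1) :
    Covers (tent s hs hs2) a b (tentR s b) (tentR s a) := by
  have hs0 : 0 < s := by linarith
  have hc := mul_tentC hs0
  rintro z ⟨h1, h2⟩
  rw [tentR_right hs0 (by linarith)] at h1
  rw [tentR_right hs0 ha] at h2
  have hx : s * ((s - z) / s) = s - z := by field_simp
  have h3 : a ≤ (s - z) / s := by rw [le_div_iff₀ hs0]; linarith
  have h4 : (s - z) / s ≤ b := by rw [div_le_iff₀ hs0]; linarith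
  have := (tentC_mem hs hs2).1
  refine ⟨⟨(s - z) / s, by linarith, by linarith⟩, ⟨h3, h4⟩, Subtype.ext ?_⟩
  change tentR s ((s - z) / s) = z
  rw [tentR_right hs0 (by linarith), hx]
  ring

/-- One application of the tent map either stretches an interval by the factor `s`, or folds
it and leaves an interval ending in `1` of at least `s/2` times the length. -/
lemma tent_stretch {a b : ℝ} (ha : 0 ≤ a) (hab : a < b) (hb : b ≤ 1) :
    ∃ a' b' : ℝ, 0 ≤ a' ∧ b' ≤ 1 ∧ Covers (tent s hs hs2) a b a' b' ∧
      (b' - a' = s * (b - a) ∨ (b' = 1 ∧ s / 2 * (b - a) ≤ b' - a')) := by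
  have hs0 : 0 < s := by linarith
  have hc := mul_tentC hs0
  have hI : ∀ x ∈ Icc a b, tentR s x ∈ Icc (0 : ℝ) 1 := fun x hx =>
    tentR_mem hs hs2 ⟨ha.trans hx.1, hx.2.trans hb⟩
  have hIa := hI a ⟨le_rfl, hab.le⟩
  have hIb := hI b ⟨hab.le, le_rfl⟩
  rcases le_or_gt b (tentC s) with h | h
  · refine ⟨_, _, hIa.1, hIb.2, covers_left hs hs2 ha hab.le h, Or.inl ?_⟩
    rw [tentR_left hs0 h, tentR_left hs0 (by linarith)]
    ring
  rcases le_or_gt (tentC s) a with h' | h'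
  · refine ⟨_, _, hIb.1, hIa.2, covers_right hs hs2 h' hab.le hb, Or.inl ?_⟩
    rw [tentR_right hs0 h', tentR_right hs0 (by linarith)]
    ring
  have h1 : tentR s (tentC s) = 1 := by simp [tentR]
  rcases le_total (b - tentC s) (tentC s - a) with h2 | h2
  · refine ⟨_, _, hIa.1, h1.le, ?_, Or.inr ⟨h1, ?_⟩⟩
    · intro z hz
      obtain ⟨x, hx, hxz⟩ := covers_left hs hs2 ha h'.le le_rfl z hz
      exact ⟨x, ⟨hx.1, hx.2.trans h.le⟩, hxz⟩
    · rw [h1, tentR_left hs0 h'.le]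
      nlinarith
  · refine ⟨_, _, hIb.1, h1.le, ?_, Or.inr ⟨h1, ?_⟩⟩
    · intro z hz
      obtain ⟨x, hx, hxz⟩ := covers_right hs hs2 le_rfl h.le hb z hz
      exact ⟨x, ⟨h'.le.trans hx.1, hx.2⟩, hxz⟩
    · rw [h1, tentR_right hs0 h.le]
      nlinarith

/-- Two steps expand by `s ^ 2 / 2 > 1` if at most one of them folds. If both fold, the interval
obtained after the first step contains the turning point and `1`, hence is mapped onto `[0,1]`. -/
lemma tent_stretch_two {a b : ℝ} (ha : 0 ≤ a) (hab : a < b) (hb : b ≤ 1) :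
    EvOnto (tent s hs hs2) a b ∨ ∃ a' b' : ℝ, 0 ≤ a' ∧ b' ≤ 1 ∧
      s ^ 2 / 2 * (b - a) ≤ b' - a' ∧
      (EvOnto (tent s hs hs2) a' b' → EvOnto (tent s hs hs2) a b) := by
  have hs0 : 0 < s := by linarith
  have hd : 0 < b - a := by linarith
  obtain ⟨a1, b1, ha1, hb1, hcov, hl⟩ := tent_stretch hs hs2 ha hab hb
  have hab1 : a1 < b1 := by
    rcases hl with h | ⟨-, h⟩
    · have := mul_pos hs0 hd
      linarith
    · have := mul_pos (half_pos hs0) hd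
      linarith
  rcases hl with h | ⟨rfl, h⟩
  · obtain ⟨a2, b2, ha2, hb2, hcov2, hl2⟩ := tent_stretch hs hs2 ha1 hab1 hb1
    refine Or.inr ⟨a2, b2, ha2, hb2, ?_, fun h => hcov.evOnto (hcov2.evOnto h)⟩
    rcases hl2 with h2 | ⟨-, h2⟩
    · rw [h] at h2
      rw [h2]
      nlinarith [mul_pos hs0 (mul_pos hs0 hd)]
    · rw [h] at h2
      nlinarith
  · rcases le_or_gt a1 (tentC s) with h' | h'
    · -- the image contains `[c,1]`, and `c ↦ 1`, `1 ↦ 0`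
      left
      refine hcov.evOnto ⟨1, fun z => ?_⟩
      have hc1 := (tentC_mem hs hs2).2.le
      obtain ⟨x, hx, hxz⟩ := covers_right hs hs2 le_rfl hc1 le_rfl z (by
        rw [tentR_right hs0 hc1]
        simp [tentR])
      exact ⟨x, ⟨h'.trans hx.1, hx.2⟩, hxz⟩
    · right
      have hI : ∀ x ∈ Icc a1 1, tentR s x ∈ Icc (0 : ℝ) 1 := fun x hx =>
        tentR_mem hs hs2 ⟨ha1.trans hx.1, hx.2⟩
      have hIa := hI a1 ⟨le_rfl, hab1.le⟩
      have hIb := hI 1 ⟨hab1.le, le_rfl⟩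
      refine ⟨_, _, hIb.1, hIa.2, ?_,
        fun h => hcov.evOnto ((covers_right hs hs2 h'.le hab1.le le_rfl).evOnto h)⟩
      rw [tentR_right hs0 h'.le, tentR_right hs0 (h'.trans hab1).le]
      nlinarith

lemma tent_evOnto (k : ℕ) : ∀ {a b : ℝ}, 0 ≤ a → a < b → b ≤ 1 →
    1 < (25 / 18 : ℝ) ^ k * (b - a) → EvOnto (tent s hs hs2) a b := by
  induction k with
  | zero =>
    intro a b ha hab hb h
    simp only [pow_zero, one_mul] at h
    linarith
  | succ k ih =>
    intro a b ha hab hb h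
    rcases tent_stretch_two hs hs2 ha hab hb with h' | ⟨a', b', ha', hb', hl, himp⟩
    · exact h'
    · have hd : 0 < b - a := by linarith
      have hq : (25 / 18 : ℝ) ≤ s ^ 2 / 2 := by nlinarith
      have hl' : 25 / 18 * (b - a) ≤ b' - a' := by nlinarith
      refine himp (ih ha' (by linarith) hb' (h.trans_le ?_))
      rw [pow_succ, mul_assoc]
      gcongr

lemma tent_leo : LEO (tent s hs hs2) := by
  intro ε hε x
  -- a nondegenerate closed interval inside the ball
  obtain ⟨a, b, ha, hab, hb, hball⟩ : ∃ a b : ℝ, 0 ≤ a ∧ a < b ∧ b ≤ 1 ∧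
      ∀ y : unitI, (y : ℝ) ∈ Icc a b → y ∈ Metric.ball x ε := by
    refine ⟨max 0 (x - ε / 2), min 1 (x + ε / 2), le_max_left _ _, ?_, min_le_left _ _, ?_⟩
    · have h1 := x.2.1
      have h2 := x.2.2
      rw [lt_min_iff, max_lt_iff, max_lt_iff]
      refine ⟨⟨?_, ?_⟩, ?_, ?_⟩ <;> linarith
    · rintro y ⟨h1, h2⟩
      rw [max_le_iff] at h1
      rw [le_min_iff] at h2
      rw [Metric.mem_ball, Subtype.dist_eq, Real.dist_eq, abs_lt]
      constructor <;> linarith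
  have hd : 0 < b - a := by linarith
  obtain ⟨k, hk⟩ := pow_unbounded_of_one_lt (1 / (b - a)) (show (1 : ℝ) < 25 / 18 by norm_num)
  obtain ⟨N, hN⟩ := tent_evOnto hs hs2 k ha hab hb ((div_lt_iff₀ hd).1 hk)
  refine ⟨N, eq_univ_of_forall fun z => ?_⟩
  obtain ⟨y, hy, hyz⟩ := hN z
  exact ⟨y, hball y hy, hyz⟩

end LEO

/-! ### Kneading series -/

/-- The one-sided shift. -/
def shift {S : Type*} (x : ℕ → S) : ℕ → S := fun t => x (t + 1)

lemma shift_iterate {S : Type*} (k : ℕ) (x : ℕ → S) (t : ℕ) : (shift^[k] x) t = x (t + k) := by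
  induction k generalizing x with
  | zero => rfl
  | succ k ih =>
    rw [Function.iterate_succ_apply, ih]
    simp only [shift]
    congr 1

/-- The sign of a letter; `true` stands for the decreasing branch, to the right of the turning
point, and `false` for the increasing one. -/
def sg (b : Bool) : ℝ := if b then 1 else -1

lemma sg_sq (b : Bool) : sg b * sg b = 1 := by cases b <;> simp [sg]

lemma abs_sg (b : Bool) : |sg b| = 1 := by cases b <;> simp [sg]

/-- The signs `∏_{i < j} (-sg θ_i)` of the kneading series. -/
def eta (θ : ℕ → Bool) : ℕ → ℝ
  | 0 => 1
  | j + 1 => -sg (θ j) * eta θ j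

lemma abs_eta (θ : ℕ → Bool) (j : ℕ) : |eta θ j| = 1 := by
  induction j with
  | zero => simp [eta]
  | succ j ih => simp [eta, abs_mul, abs_sg, ih]

lemma eta_shift (θ : ℕ → Bool) (j : ℕ) : eta θ (j + 1) = -sg (θ 0) * eta (shift θ) j := by
  induction j with
  | zero => simp [eta]
  | succ j ih =>
    rw [eta, ih, eta, shift]
    ring

lemma continuous_eta (j : ℕ) : Continuous fun θ : ℕ → Bool => eta θ j := by
  induction j with
  | zero => exact continuous_const
  | succ j ih =>
    have h : Continuous fun θ : ℕ → Bool => sg (θ j) :=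
      (continuous_of_discreteTopology (f := sg)).comp (continuous_apply j)
    exact h.neg.mul ih

/-- The kneading series. For slope `s`, the point `1 - ku s θ` is the one whose itinerary under
the tent map is `θ` (when `θ` is admissible). -/
def ku (s : ℝ) (θ : ℕ → Bool) : ℝ := ∑' j, eta θ j * s⁻¹ ^ (j + 1)

lemma norm_ku_term (s : ℝ) (hs : 5 / 3 ≤ s) (θ : ℕ → Bool) (j : ℕ) :
    ‖eta θ j * s⁻¹ ^ (j + 1)‖ ≤ s⁻¹ ^ (j + 1) := by
  have h0 : 0 < s⁻¹ := by
    rw [inv_pos]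
    linarith
  rw [norm_mul, Real.norm_eq_abs, abs_eta, one_mul, Real.norm_eq_abs, abs_of_pos (by positivity)]

lemma inv_slope_lt {s : ℝ} (hs : 5 / 3 ≤ s) : 0 < s⁻¹ ∧ s⁻¹ ≤ 3 / 5 := by
  constructor
  · rw [inv_pos]
    linarith
  · rw [inv_le_comm₀ (by linarith) (by norm_num)]
    norm_num
    linarith

lemma hasSum_slope {s : ℝ} (hs : 5 / 3 ≤ s) : HasSum (fun j => s⁻¹ ^ (j + 1)) (s - 1)⁻¹ := by
  obtain ⟨h0, h1⟩ := inv_slope_lt hs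
  have h := (hasSum_geometric_of_lt_one h0.le (by linarith)).mul_left s⁻¹
  have he : s⁻¹ * (1 - s⁻¹)⁻¹ = (s - 1)⁻¹ := by
    rw [← mul_inv, mul_sub, mul_inv_cancel₀ (by linarith : s ≠ 0), mul_one]
  rw [he] at h
  refine h.congr_fun fun j => ?_
  rw [pow_succ']

lemma summable_ku {s : ℝ} (hs : 5 / 3 ≤ s) (θ : ℕ → Bool) :
    Summable fun j => eta θ j * s⁻¹ ^ (j + 1) :=
  Summable.of_norm_bounded (hasSum_slope hs).summable (norm_ku_term s hs θ)

lemma abs_ku_le {s : ℝ} (hs : 5 / 3 ≤ s) (θ : ℕ → Bool) : |ku s θ| ≤ (s - 1)⁻¹ :=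
  tsum_of_norm_bounded (hasSum_slope hs) (norm_ku_term s hs θ)

lemma ku_rec {s : ℝ} (hs : 5 / 3 ≤ s) (θ : ℕ → Bool) :
    s * ku s θ = 1 - sg (θ 0) * ku s (shift θ) := by
  have hs0 : s ≠ 0 := by linarith
  have h : ku s θ = s⁻¹ + -sg (θ 0) * s⁻¹ * ku s (shift θ) := by
    unfold ku
    rw [(summable_ku hs θ).tsum_eq_zero_add, ← tsum_mul_left]
    congr 1
    · simp [eta]
    · refine tsum_congr fun j => ?_
      rw [eta_shift, pow_succ]
      ring
  rw [h]
  field_simp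
  ring

lemma continuous_ku {s : ℝ} (hs : 5 / 3 ≤ s) : Continuous (ku s) :=
  continuous_tsum (fun j => (continuous_eta j).mul continuous_const) (hasSum_slope hs).summable
    fun j θ => norm_ku_term s hs θ j

lemma continuousOn_ku (θ : ℕ → Bool) : ContinuousOn (fun s => ku s θ) (Icc (5 / 3) 2) := by
  refine continuousOn_tsum (u := fun j => (5 / 3 : ℝ)⁻¹ ^ (j + 1)) (fun j => ?_)
    (hasSum_slope le_rfl).summable fun j s hs => ?_
  · refine continuousOn_const.mul (ContinuousOn.pow ?_ _)
    refine continuousOn_id.inv₀ fun s hs => ?_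
    have := hs.1
    simp only [id]
    linarith
  · refine (norm_ku_term s hs.1 θ j).trans ?_
    have := (inv_slope_lt hs.1)
    refine pow_le_pow_left₀ this.1.le ?_ _
    norm_num
    linarith [this.2]

lemma ku_ge {s : ℝ} (hs : 5 / 3 ≤ s) (θ : ℕ → Bool) : -(3 / 10) ≤ ku s θ := by
  have h := ku_rec hs θ
  have h1 := abs_ku_le hs (shift θ)
  have h2 : (s - 1)⁻¹ ≤ 3 / 2 := by
    rw [inv_le_comm₀ (by linarith) (by norm_num)]
    norm_num
    linarith
  have h3 : sg (θ 0) * ku s (shift θ) ≤ 3 / 2 := by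
    refine (le_abs_self _).trans ?_
    rw [abs_mul, abs_sg, one_mul]
    linarith
  by_contra hc
  push Not at hc
  nlinarith

/-- Among any four consecutive letters there is a `true`. -/
def NoZeros (θ : ℕ → Bool) : Prop := ∀ i, ∃ t < 4, θ (i + t) = true

lemma NoZeros.shift {θ : ℕ → Bool} (h : NoZeros θ) : NoZeros (shift θ) := by
  intro i
  obtain ⟨t, ht, h⟩ := h (i + 1)
  refine ⟨t, ht, ?_⟩
  rw [_root_.shift, ← h]
  congr 1
  ring

/-- The kneading sequence `1 0 0 0 0 0 w`. The block of five zeros, which does not occur in `w`,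
makes it dominate all shifts of `w`. -/
def knead (w : ℕ → Bool) : ℕ → Bool := fun i => if i = 0 then true else if i < 6 then false
  else w (i - 6)

lemma ku_true {s : ℝ} (hs : 5 / 3 ≤ s) {θ : ℕ → Bool} (h : θ 0 = true) :
    s * ku s θ = 1 - ku s (shift θ) := by
  rw [ku_rec hs, h]
  simp [sg]

lemma ku_false {s : ℝ} (hs : 5 / 3 ≤ s) {θ : ℕ → Bool} (h : θ 0 = false) :
    s * ku s θ = 1 + ku s (shift θ) := by
  rw [ku_rec hs, h]
  simp [sg]

lemma ku_knead_zero {s : ℝ} (hs : 5 / 3 ≤ s) (w : ℕ → Bool) :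
    s * ku s (knead w) = 1 - ku s (shift^[1] (knead w)) := by
  rw [ku_true hs]
  · rfl
  · simp [knead]

lemma ku_knead_succ {s : ℝ} (hs : 5 / 3 ≤ s) (w : ℕ → Bool) {j : ℕ} (h1 : 1 ≤ j) (h5 : j ≤ 5) :
    s * ku s (shift^[j] (knead w)) = 1 + ku s (shift^[j + 1] (knead w)) := by
  rw [ku_false hs]
  · rw [Function.iterate_succ_apply']
  · rw [shift_iterate, knead, if_neg (by omega), if_pos (by omega)]

lemma shift_knead (w : ℕ → Bool) : shift^[6] (knead w) = w := by
  funext t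
  rw [shift_iterate, knead, if_neg (by omega), if_neg (by omega)]
  congr 1

/-- Some tent map has the prescribed kneading sequence. -/
lemma exists_slope (w : ℕ → Bool) :
    ∃ s : ℝ, 5 / 3 ≤ s ∧ s ≤ 2 ∧ ku s (knead w) = 0 := by
  have h2 : 0 ≤ ku 2 (knead w) := by
    have hs : (5 / 3 : ℝ) ≤ 2 := by norm_num
    have h := ku_knead_zero hs w
    have h1 := abs_ku_le hs (shift^[1] (knead w))
    norm_num at h1
    have := (abs_le.1 h1).2
    simp only [Function.iterate_one] at h
    linarith
  have h1 : ku (5 / 3) (knead w) ≤ 0 := by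
    have hs : (5 / 3 : ℝ) ≤ 5 / 3 := le_rfl
    have h0 := ku_knead_zero hs w
    have h1 := ku_knead_succ hs w (j := 1) (by norm_num) (by norm_num)
    have h2 := ku_knead_succ hs w (j := 2) (by norm_num) (by norm_num)
    have h3 := ku_knead_succ hs w (j := 3) (by norm_num) (by norm_num)
    have h4 := ku_knead_succ hs w (j := 4) (by norm_num) (by norm_num)
    have h5 := ku_knead_succ hs w (j := 5) (by norm_num) (by norm_num)
    have h6 := ku_ge hs (shift^[6] (knead w))
    norm_num only at *
    linarith
  obtain ⟨s, hs, h0⟩ := intermediate_value_Icc (show (5 / 3 : ℝ) ≤ 2 by norm_num)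
    (continuousOn_ku (knead w)) ⟨h1, h2⟩
  exact ⟨s, hs.1, hs.2, h0⟩

section Admissible
variable {s : ℝ} {w : ℕ → Bool}

lemma ku_knead_one (hs : 5 / 3 ≤ s) (h0 : ku s (knead w) = 0) :
    ku s (shift^[1] (knead w)) = 1 := by
  have := ku_knead_zero hs w
  rw [h0] at this
  linarith

lemma ku_knead_gt (hs : 5 / 3 ≤ s) (hs2 : s ≤ 2) {j : ℕ} (h1 : 1 ≤ j) (h5 : j ≤ 5) :
    3 / 10 < ku s (shift^[j] (knead w)) := by
  have h := ku_knead_succ hs w h1 h5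
  have h' := ku_ge hs (shift^[j + 1] (knead w))
  by_contra hc
  push Not at hc
  nlinarith

/-- Points starting with `0^r 1`, `r ≤ 3`, lie strictly on the correct side of the
corresponding point on the critical orbit. -/
lemma ku_lt_knead (hs : 5 / 3 ≤ s) (hs2 : s ≤ 2) (r : ℕ) :
    ∀ (j : ℕ) (θ : ℕ → Bool), 1 ≤ j → r + j ≤ 4 → θ r = true → (∀ i < r, θ i = false) →
      ku s θ < ku s (shift^[j] (knead w)) := by
  induction r with
  | zero =>
    intro j θ h1 h4 hr _
    have ha := ku_true hs hr
    have hb := ku_knead_succ hs w h1 (by omega)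
    have hc := ku_ge hs (shift θ)
    have hd := ku_knead_gt (w := w) hs hs2 (j := j + 1) (by omega) (by omega)
    by_contra hcon
    push Not at hcon
    nlinarith
  | succ r ih =>
    intro j θ h1 h4 hr hz
    have ha := ku_false hs (hz 0 (by omega))
    have hb := ku_knead_succ hs w h1 (by omega)
    have hc := ih (j + 1) (shift θ) (by omega) (by omega) hr fun i hi => hz (i + 1) (by omega)
    by_contra hcon
    push Not at hcon
    nlinarith

lemma ku_lt_one (hs : 5 / 3 ≤ s) (hs2 : s ≤ 2) (h0 : ku s (knead w) = 0) {θ : ℕ → Bool}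
    (hθ : NoZeros θ) : ku s θ < 1 := by
  classical
  have hex : ∃ r, θ r = true := by
    obtain ⟨t, -, h⟩ := hθ 0
    exact ⟨_, h⟩
  have hle : Nat.find hex ≤ 3 := by
    obtain ⟨t, ht, h⟩ := hθ 0
    rw [zero_add] at h
    have := Nat.find_min' hex h
    omega
  rw [← ku_knead_one hs h0]
  refine ku_lt_knead hs hs2 (Nat.find hex) 1 θ le_rfl (by omega) (Nat.find_spec hex) ?_
  intro i hi
  simpa using Nat.find_min hex hi

lemma ku_pos (hs : 5 / 3 ≤ s) (hs2 : s ≤ 2) (h0 : ku s (knead w) = 0) {θ : ℕ → Bool}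
    (hθ : NoZeros θ) : 0 < ku s θ := by
  cases h : θ 0
  · have h1 := ku_false hs h
    have h2 := ku_ge hs (shift θ)
    by_contra hcon
    push Not at hcon
    nlinarith
  · have h1 := ku_true hs h
    have h2 := ku_lt_one hs hs2 h0 hθ.shift
    by_contra hcon
    push Not at hcon
    nlinarith

lemma ku_injective (hs : 5 / 3 ≤ s) (hs2 : s ≤ 2) (h0 : ku s (knead w) = 0) {θ θ' : ℕ → Bool}
    (hθ : NoZeros θ) (hθ' : NoZeros θ') (h : ku s θ = ku s θ') : θ = θ' := by
  -- the first letter is the sign of `1 - s * ku s θ`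
  have step : ∀ {θ θ' : ℕ → Bool}, NoZeros θ → NoZeros θ' → ku s θ = ku s θ' →
      θ 0 = θ' 0 ∧ ku s (shift θ) = ku s (shift θ') := by
    intro θ θ' hθ hθ' h
    have h1 := ku_rec hs θ
    have h2 := ku_rec hs θ'
    have h3 := ku_pos hs hs2 h0 hθ.shift
    have h4 := ku_pos hs hs2 h0 hθ'.shift
    rw [h, h2] at h1
    cases ha : θ 0 <;> cases hb : θ' 0 <;> simp only [ha, hb, sg] at h1 <;>
      norm_num at h1 ⊢ <;> linarith
  have all : ∀ (k : ℕ) {θ θ' : ℕ → Bool}, NoZeros θ → NoZeros θ' → ku s θ = ku s θ' →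
      θ k = θ' k := by
    intro k
    induction k with
    | zero => exact fun hθ hθ' h => (step hθ hθ' h).1
    | succ k ih => exact fun hθ hθ' h => ih hθ.shift hθ'.shift (step hθ hθ' h).2
  exact funext fun k => all k hθ hθ' h

lemma tentR_ku (hs : 5 / 3 ≤ s) (θ : ℕ → Bool) (h : 0 ≤ ku s (shift θ)) :
    tentR s (1 - ku s θ) = 1 - ku s (shift θ) := by
  have hs0 : 0 < s := by linarith
  have h1 := ku_rec hs θ
  have h2 : s * |1 - ku s θ - tentC s| = |1 - s * ku s θ| := by
    rw [← abs_of_pos hs0, ← abs_mul, abs_of_pos hs0, mul_sub, mul_tentC hs0]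
    congr 1
    ring
  rw [tentR, h2, h1]
  simp [abs_mul, abs_sg, abs_of_nonneg h]

end Admissible

/-- The point of the unit interval with itinerary `θ`. The projection to `[0,1]` only matters
for sequences that are not admissible. -/
def coord (s : ℝ) (θ : ℕ → Bool) : unitI := projIcc 0 1 zero_le_one (1 - ku s θ)

/-- Every sequence `w` without four consecutive zeros is the tail of the itinerary of the
turning point of some tent map, and the sequences without four consecutive zeros code points
injectively. -/
theorem exists_tent (w : ℕ → Bool) (hw : NoZeros w) :
    ∃ (f : unitI → unitI) (c : unitI) (Φ : (ℕ → Bool) → unitI), Unimodal f c ∧ LEO f ∧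
      Continuous Φ ∧ (∀ θ, NoZeros θ → f (Φ θ) = Φ (shift θ)) ∧
      (∀ θ θ', NoZeros θ → NoZeros θ' → Φ θ = Φ θ' → θ = θ') ∧ f^[7] c = Φ w := by
  obtain ⟨s, hs, hs2, h0⟩ := exists_slope w
  have hcoe : ∀ θ, 0 ≤ ku s θ → ku s θ ≤ 1 → (coord s θ : ℝ) = 1 - ku s θ := by
    intro θ h1 h2
    rw [coord, projIcc_of_mem _ ⟨by linarith, by linarith⟩]
  have hf : ∀ θ, 0 ≤ ku s θ → ku s θ ≤ 1 → 0 ≤ ku s (shift θ) → ku s (shift θ) ≤ 1 →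
      tent s hs hs2 (coord s θ) = coord s (shift θ) := by
    intro θ h1 h2 h3 h4
    apply Subtype.ext
    change tentR s (coord s θ) = _
    rw [hcoe θ h1 h2, hcoe _ h3 h4, tentR_ku hs θ h3]
  refine ⟨tent s hs hs2, tentCI s hs hs2, coord s, tent_unimodal s hs hs2, tent_leo hs hs2,
    ?_, ?_, ?_, ?_⟩
  · exact continuous_projIcc.comp (continuous_const.sub (continuous_ku hs))
  · intro θ hθ
    exact hf θ (ku_pos hs hs2 h0 hθ).le (ku_lt_one hs hs2 h0 hθ).le
      (ku_pos hs hs2 h0 hθ.shift).le (ku_lt_one hs hs2 h0 hθ.shift).le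
  · intro θ θ' hθ hθ' h
    have h' := congrArg Subtype.val h
    rw [hcoe θ (ku_pos hs hs2 h0 hθ).le (ku_lt_one hs hs2 h0 hθ).le,
      hcoe θ' (ku_pos hs hs2 h0 hθ').le (ku_lt_one hs hs2 h0 hθ').le] at h'
    exact ku_injective hs hs2 h0 hθ hθ' (by linarith)
  · -- the critical orbit follows `knead w`
    have hle : ∀ j, j ≤ 5 → 0 ≤ ku s (shift^[j] (knead w)) ∧ ku s (shift^[j] (knead w)) ≤ 1 := by
      intro j
      induction j with
      | zero => exact fun _ => by simp [h0]
      | succ j ih =>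
        intro hj
        refine ⟨by linarith [ku_knead_gt (w := w) hs hs2 (j := j + 1) (by omega) hj], ?_⟩
        rcases Nat.eq_zero_or_pos j with rfl | hj0
        · exact (ku_knead_one hs h0).le
        · have h1 := ku_knead_succ hs w hj0 (by omega)
          have h2 := (ih (by omega)).1
          have h3 := (ih (by omega)).2
          nlinarith
    have hle' : ∀ j, j ≤ 6 →
        0 ≤ ku s (shift^[j] (knead w)) ∧ ku s (shift^[j] (knead w)) ≤ 1 := by
      intro j hj
      rcases Nat.lt_or_ge j 6 with h | h
      · exact hle j (by omega)
      · obtain rfl : j = 6 := by omega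
        rw [shift_knead]
        exact ⟨(ku_pos hs hs2 h0 hw).le, (ku_lt_one hs hs2 h0 hw).le⟩
    have horb : ∀ j, j ≤ 6 →
        (tent s hs hs2)^[j + 1] (tentCI s hs hs2) = coord s (shift^[j] (knead w)) := by
      intro j
      induction j with
      | zero =>
        intro _
        apply Subtype.ext
        change tentR s (tentC s) = coord s (knead w)
        rw [hcoe _ h0.ge (by linarith), h0]
        simp [tentR]
      | succ j ih =>
        intro hj
        rw [Function.iterate_succ_apply', ih (by omega), Function.iterate_succ_apply']
        have h1 := hle' j (by omega)
        have h2 := hle' (j + 1) hj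
        rw [Function.iterate_succ_apply'] at h2
        exact hf _ h1.1 h1.2 h2.1 h2.2
    rw [horb 6 le_rfl, shift_knead]

/-! ### Symbolic description of the omega-limit set and of the inhomogeneities -/

section Symbolic
variable {S : Type}

/-- The omega-limit set, under the shift, of a sequence of symbols: all sequences whose initial
segments occur arbitrarily far out in `w`. -/
def Om (w : ℕ → S) : Set (ℕ → S) :=
  {x | ∀ M N : ℕ, ∃ i, N ≤ i ∧ ∀ t < M, w (i + t) = x t}

/-- The right half, starting at position `p`, of a bi-infinite sequence. -/
def half (z : ℤ → S) (p : ℤ) : ℕ → S := fun t => z (p + t)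

/-- The bi-infinite sequences all of whose right halves belong to `X`. -/
def Bi (X : Set (ℕ → S)) : Set (ℤ → S) := {z | ∀ p, half z p ∈ X}

lemma Om.shift_mem {w x : ℕ → S} (hx : x ∈ Om w) : shift x ∈ Om w := by
  intro M N
  obtain ⟨i, hi, h⟩ := hx (M + 1) N
  refine ⟨i + 1, by omega, fun t ht => ?_⟩
  rw [shift, ← h (t + 1) (by omega)]
  congr 1
  ring

lemma isClosed_Om [TopologicalSpace S] [DiscreteTopology S] (w : ℕ → S) : IsClosed (Om w) := by
  rw [← isOpen_compl_iff, isOpen_iff_forall_mem_open]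
  intro x hx
  simp only [Om, mem_compl_iff, mem_ofPred_eq, not_forall, not_exists] at hx
  obtain ⟨M, N, h⟩ := hx
  refine ⟨{y | ∀ t ∈ Finset.range M, y t = x t}, ?_, isOpen_window _ _, fun t _ => rfl⟩
  intro y hy hyO
  obtain ⟨i, hi, h'⟩ := hyO M N
  exact h i ⟨hi, fun t ht => (h' t ht).trans (hy t (Finset.mem_range.2 ht))⟩

lemma isClosed_Bi [TopologicalSpace S] {X : Set (ℕ → S)} (hX : IsClosed X) : IsClosed (Bi X) := by
  have : Bi X = ⋂ p, (fun z : ℤ → S => half z p) ⁻¹' X := by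
    ext z
    simp [Bi]
  rw [this]
  refine isClosed_iInter fun p => hX.preimage ?_
  exact continuous_pi fun t => continuous_apply _

lemma exists_prefix_window [TopologicalSpace S] [DiscreteTopology S] {x : ℕ → S}
    {U : Set (ℕ → S)} (hU : IsOpen U) (hx : x ∈ U) :
    ∃ M : ℕ, ∀ y : ℕ → S, (∀ t < M, y t = x t) → y ∈ U := by
  obtain ⟨F, hF⟩ := exists_finset_window hU hx
  obtain ⟨M, hM⟩ := F.exists_nat_subset_range
  exact ⟨M, fun y hy => hF y fun t ht => hy t (Finset.mem_range.1 (hM ht))⟩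

/-- Coherent families of one-sided sequences glue to a bi-infinite sequence. -/
lemma exists_glue (y : ℕ → ℕ → S) (hy : ∀ i, shift (y (i + 1)) = y i) :
    ∃ z : ℤ → S, (∀ i : ℕ, half z (-i) = y i) ∧ ∀ p : ℕ, half z p = shift^[p] (y 0) := by
  have h1 : ∀ i t k, y (i + k) (t + k) = y i t := by
    intro i t k
    induction k with
    | zero => rfl
    | succ k ih =>
      rw [← ih, ← hy (i + k)]
      rfl
  have h2 : ∀ i t i' t' : ℕ, (t : ℤ) - i = t' - i' → y i t = y i' t' := by
    intro i t i' t' h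
    rw [← h1 i t i', ← h1 i' t' i, add_comm i i']
    congr 1
    omega
  refine ⟨fun p => y p.natAbs (p + p.natAbs).toNat, fun i => ?_, fun p => ?_⟩
  · funext t
    exact h2 _ _ _ _ (by omega)
  · funext t
    rw [shift_iterate]
    exact h2 _ _ _ _ (by omega)

/-- If `ell` is a labelling of the symbols that is injective on `Om w` and the labelled sequence
has no four consecutive zeros, there is a locally eventually onto unimodal map with
omega-limit set `Om w` and set of inhomogeneities `Bi (Om w)`. -/
theorem exists_unimodal [TopologicalSpace S] [DiscreteTopology S] [Finite S] (w : ℕ → S) (ell : S → Bool)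
    (hw : NoZeros fun t => ell (w t))
    (hinj : ∀ x ∈ Om w, ∀ y ∈ Om w, (∀ t, ell (x t) = ell (y t)) → x = y) :
    ∃ (f : unitI → unitI) (c : unitI), Unimodal f c ∧ LEO f ∧
      Nonempty (Om w ≃ₜ omegaLimitSet f c) ∧ Nonempty (Bi (Om w) ≃ₜ Inhom f c) := by
  obtain ⟨f, c, Φ, huni, hleo, hΦ, hconj, hΦinj, horb⟩ := exists_tent _ hw
  refine ⟨f, c, huni, hleo, ?_⟩
  set Ψ : (ℕ → S) → unitI := fun x => Φ fun t => ell (x t) with hΨdef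
  have hΨ : Continuous Ψ := hΦ.comp (continuous_pi fun t =>
    (continuous_of_discreteTopology (f := ell)).comp (continuous_apply t))
  have hNZ : ∀ x ∈ Om w, NoZeros fun t => ell (x t) := by
    intro x hx i
    obtain ⟨k, -, hk⟩ := hx (i + 4) 0
    obtain ⟨t, ht, h⟩ := hw (k + i)
    refine ⟨t, ht, ?_⟩
    change ell (x (i + t)) = true
    rw [← hk (i + t) (by omega), ← add_assoc]
    exact h
  have hΨc : ∀ x, (NoZeros fun t => ell (x t)) → f (Ψ x) = Ψ (shift x) := fun x hx => hconj _ hx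
  have hΨinj : ∀ x ∈ Om w, ∀ y ∈ Om w, Ψ x = Ψ y → x = y := fun x hx y hy h =>
    hinj x hx y hy fun t => congrFun (hΦinj _ _ (hNZ x hx) (hNZ y hy) h) t
  have hNZw : ∀ m, NoZeros fun t => ell ((shift^[m] w) t) := by
    intro m i
    obtain ⟨t, ht, h⟩ := hw (i + m)
    refine ⟨t, ht, ?_⟩
    change ell ((shift^[m] w) (i + t)) = true
    rw [shift_iterate, add_right_comm]
    exact h
  have horb' : ∀ m, f^[m + 7] c = Ψ (shift^[m] w) := by
    intro m
    induction m with
    | zero => simpa using horb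
    | succ m ih =>
      rw [show m + 1 + 7 = (m + 7) + 1 by ring, Function.iterate_succ_apply', ih,
        Function.iterate_succ_apply', hΨc _ (hNZw m)]
  have hmem : ∀ x ∈ Om w, Ψ x ∈ omegaLimitSet f c := by
    intro x hx
    rw [omegaLimitSet, mem_iInter]
    intro n
    rw [mem_closure_iff]
    intro U hU hxU
    obtain ⟨M, hM⟩ := exists_prefix_window (hU.preimage hΨ) hxU
    obtain ⟨i, hi, h⟩ := hx M n
    refine ⟨Ψ (shift^[i] w), hM _ fun t ht => ?_, i + 7, by omega, horb' i⟩
    rw [shift_iterate, add_comm, h t ht]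
  have hsurj : ∀ y ∈ omegaLimitSet f c, ∃ x ∈ Om w, Ψ x = y := by
    intro y hy
    have hcl : MapClusterPt y atTop fun m => Ψ (shift^[m] w) := by
      rw [mapClusterPt_iff_frequently]
      intro U hU
      rw [frequently_atTop]
      intro n
      rw [omegaLimitSet, mem_iInter] at hy
      obtain ⟨_, hz, m, hm, rfl⟩ := mem_closure_iff_nhds.1 (hy (n + 7)) U hU
      refine ⟨m - 7, by omega, ?_⟩
      rw [← horb', Nat.sub_add_cancel (by omega)]
      exact hz
    obtain ⟨𝒰, hle, hlim⟩ := mapClusterPt_iff_ultrafilter.1 hcl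
    obtain ⟨x, -, hx⟩ := isCompact_univ.ultrafilter_le_nhds (𝒰.map fun m => shift^[m] w)
      (by simp)
    have hx' : Tendsto (fun m => shift^[m] w) 𝒰 (nhds x) := hx
    refine ⟨x, fun M N => ?_, tendsto_nhds_unique ((hΨ.tendsto x).comp hx') hlim⟩
    have h1 : ∀ᶠ m in (𝒰 : Filter ℕ), ∀ t ∈ Finset.range M, (shift^[m] w) t = x t :=
      hx' ((isOpen_window (Finset.range M) x).mem_nhds fun t _ => rfl)
    have h2 : ∀ᶠ m in (𝒰 : Filter ℕ), N ≤ m := hle (eventually_ge_atTop N)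
    obtain ⟨m, hm1, hm2⟩ := (h1.and h2).exists
    refine ⟨m, hm2, fun t ht => ?_⟩
    rw [← hm1 t (Finset.mem_range.2 ht), shift_iterate, add_comm]
  constructor
  · have : CompactSpace (Om w) := isCompact_iff_compactSpace.1 (isClosed_Om w).isCompact
    let g : Om w → omegaLimitSet f c := fun x => ⟨Ψ x, hmem x x.2⟩
    have hg : Function.Bijective g := by
      constructor
      · intro x y h
        exact Subtype.ext (hΨinj x x.2 y y.2 (congrArg Subtype.val h))
      · rintro ⟨y, hy⟩
        obtain ⟨x, hx, rfl⟩ := hsurj y hy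
        exact ⟨⟨x, hx⟩, rfl⟩
    have hgc : Continuous (Equiv.ofBijective g hg) :=
      (hΨ.comp continuous_subtype_val).subtype_mk _
    exact ⟨hgc.homeoOfEquivCompactToT2⟩
  · have : CompactSpace (Bi (Om w)) :=
      isCompact_iff_compactSpace.1 (isClosed_Bi (isClosed_Om w)).isCompact
    have hlim : ∀ z ∈ Bi (Om w), (fun i : ℕ => Ψ (half z (-i))) ∈ InvLim f := by
      intro z hz i
      rw [hΨc _ (hNZ _ (hz _))]
      congr 1
      funext t
      simp only [shift, half]
      congr 1
      push_cast
      ring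
    let g : Bi (Om w) → Inhom f c := fun z =>
      ⟨⟨fun i : ℕ => Ψ (half z (-i)), hlim z z.2⟩, fun i => hmem _ (z.2 _)⟩
    have hg : Function.Bijective g := by
      constructor
      · intro z z' h
        have h' : ∀ i : ℕ, half (z : ℤ → S) (-i) = half (z' : ℤ → S) (-i) := fun i =>
          hΨinj _ (z.2 _) _ (z'.2 _)
            (congrFun (congrArg Subtype.val (congrArg Subtype.val h)) i)
        refine Subtype.ext (funext fun p => ?_)
        have := congrFun (h' p.natAbs) (p + p.natAbs).toNat
        simp only [half] at this
        rwa [show -(p.natAbs : ℤ) + ((p + p.natAbs).toNat : ℤ) = p by omega] at this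
      · rintro ⟨⟨x, hx⟩, hxm⟩
        choose y hyO hyx using fun i => hsurj (x i) (hxm i)
        have hcoh : ∀ i, shift (y (i + 1)) = y i := by
          intro i
          refine hΨinj _ (Om.shift_mem (hyO _)) _ (hyO _) ?_
          rw [← hΨc _ (hNZ _ (hyO _)), hyx, hyx]
          exact hx i
        obtain ⟨z, hz1, hz2⟩ := exists_glue y hcoh
        have hz : z ∈ Bi (Om w) := by
          intro p
          rcases le_total p 0 with hp | hp
          · obtain ⟨i, rfl⟩ := Int.exists_eq_neg_ofNat hp
            rw [hz1]
            exact hyO i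
          · lift p to ℕ using hp
            rw [hz2]
            induction p with
            | zero => exact hyO 0
            | succ p ih =>
              rw [Function.iterate_succ_apply']
              exact Om.shift_mem ih
        refine ⟨⟨z, hz⟩, Subtype.ext (Subtype.ext (funext fun i => ?_))⟩
        change Ψ (half z (-i)) = x i
        rw [hz1, hyx]
    have hgc : Continuous (Equiv.ofBijective g hg) := by
      refine Continuous.subtype_mk (Continuous.subtype_mk (continuous_pi fun i => ?_) _) _
      refine hΨ.comp (continuous_pi fun t => ?_)
      exact (continuous_apply _).comp continuous_subtype_val
    exact ⟨hgc.homeoOfEquivCompactToT2⟩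

end Symbolic

/-! ### A sequence with prescribed limit set -/

/-- Starting positions of the blocks in `exists_word`: block `j` consists of `j + 4` periods
followed by a word of length `L j`. -/
def blockStart (n : ℕ) (L : ℕ → ℕ) : ℕ → ℕ
  | 0 => 0
  | j + 1 => blockStart n L j + n * (j + 4) + L j

lemma le_blockStart {n : ℕ} (hn : 0 < n) (L : ℕ → ℕ) (j : ℕ) : j ≤ blockStart n L j := by
  induction j with
  | zero => exact le_rfl
  | succ j ih =>
    rw [blockStart]
    have : 1 * (j + 4) ≤ n * (j + 4) := Nat.mul_le_mul_right _ hn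
    omega

lemma blockStart_mono (n : ℕ) (L : ℕ → ℕ) : Monotone (blockStart n L) :=
  monotone_nat_of_le_succ fun j => by
    rw [blockStart]
    omega

lemma periodic_mul {S : Type} {n : ℕ} {α : ℤ → S} (hα : ∀ p, α (p + n) = α p) (p : ℤ) (k : ℕ) :
    α (p + n * k) = α p := by
  induction k with
  | zero => simp
  | succ k ih =>
    rw [← ih, ← hα (p + n * k)]
    congr 1
    push_cast
    ring

/-- Let `e k` be bi-infinite sequences that agree with a periodic sequence `α` to the left of `0`
and, up to a shift, to the right of `L k`. Then the concatenation of longer and longer pieces of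
the `e k`, each used infinitely often, has as limit set the closure of the set of all right
halves of the `e k`. -/
theorem exists_word {S : Type} {n : ℕ} (hn : 0 < n) (α : ℤ → S) (hα : ∀ p, α (p + n) = α p)
    (e : ℕ → ℤ → S) (L : ℕ → ℕ) (hneg : ∀ k p, p < 0 → e k p = α p)
    (hpos : ∀ k p, (L k : ℤ) ≤ p → e k p = α (p - L k)) :
    ∃ w : ℕ → S, (∀ i, ∃ (k : ℕ) (p : ℤ), ∀ t < 4, w (i + t) = e k (p + t)) ∧
      ∀ x, x ∈ Om w ↔ ∀ M, ∃ (k : ℕ) (p : ℤ), ∀ t < M, e k (p + (t : ℕ)) = x t := by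
  classical
  set φ : ℕ → ℕ := fun j => (Nat.unpair j).1 with hφ
  set T : ℕ → ℕ := blockStart n (fun j => L (φ j)) with hT
  have hTle : ∀ j, j ≤ T j := le_blockStart hn _
  have hTmono : Monotone T := blockStart_mono n _
  have hTsucc : ∀ j, T (j + 1) = T j + n * (j + 4) + L (φ j) := fun j => rfl
  have hex : ∀ i, ∃ j, i < T (j + 1) := fun i => ⟨i, (Nat.lt_succ_self i).trans_le (hTle _)⟩
  -- the block containing position `i`
  set J : ℕ → ℕ := fun i => Nat.find (hex i) with hJ
  have hJ1 : ∀ i, i < T (J i + 1) := fun i => Nat.find_spec (hex i)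
  have hJ2 : ∀ i, T (J i) ≤ i := by
    intro i
    rcases Nat.eq_zero_or_pos (J i) with h | h
    · rw [h]
      exact Nat.zero_le _
    · have := Nat.find_min (hex i) (m := J i - 1) (Nat.sub_lt h Nat.one_pos)
      rw [Nat.sub_add_cancel h] at this
      exact not_lt.1 this
  have hJeq : ∀ i j, T j ≤ i → i < T (j + 1) → J i = j := by
    intro i j h1 h2
    refine le_antisymm (Nat.find_min' (hex i) h2) ?_
    by_contra hcon
    push Not at hcon
    have := hTmono (show J i + 1 ≤ j from hcon)
    have := hJ1 i
    omega
  set w : ℕ → S := fun i => e (φ (J i)) ((i : ℤ) - (T (J i) + n * (J i + 4) : ℕ)) with hw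
  have hwj : ∀ i j, T j ≤ i → i < T (j + 1) →
      w i = e (φ j) ((i : ℤ) - (T j + n * (j + 4) : ℕ)) := by
    intro i j h1 h2
    simp only [hw, hJeq i j h1 h2]
  -- the formula for block `j` remains valid on the periodic beginning of block `j + 1`
  have hext : ∀ i j, T j ≤ i → i < T (j + 1) + n * (j + 5) →
      w i = e (φ j) ((i : ℤ) - (T j + n * (j + 4) : ℕ)) := by
    intro i j h1 h2
    rcases lt_or_ge i (T (j + 1)) with h | h
    · exact hwj i j h1 h
    · have h3 := hTsucc (j + 1)
      have h4 : n * (j + 1 + 4) = n * (j + 5) := by ring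
      rw [hwj i (j + 1) h (by omega), hneg _ _ (by omega), hpos]
      · have h5 := hTsucc j
        rw [← periodic_mul hα _ (j + 5)]
        congr 1
        push_cast [h5]
        ring
      · have h5 := hTsucc j
        omega
  refine ⟨w, fun i => ⟨φ (J i), (i : ℤ) - (T (J i) + n * (J i + 4) : ℕ), fun t ht => ?_⟩,
    fun x => ⟨fun hx M => ?_, fun hx M N => ?_⟩⟩
  · have h1 := hJ1 i
    have h2 := hJ2 i
    have h3 : 1 * (J i + 5) ≤ n * (J i + 5) := Nat.mul_le_mul_right _ hn
    rw [hext (i + t) (J i) (by omega) (by omega)]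
    congr 1
    push_cast
    ring
  · obtain ⟨i, hi, h⟩ := hx M (T M)
    have h1 := hJ1 i
    have h2 := hJ2 i
    have hM : M ≤ J i := by
      by_contra hcon
      push Not at hcon
      have := hTmono (show J i + 1 ≤ M from hcon)
      omega
    have h3 : 1 * (J i + 5) ≤ n * (J i + 5) := Nat.mul_le_mul_right _ hn
    refine ⟨φ (J i), (i : ℤ) - (T (J i) + n * (J i + 4) : ℕ), fun t ht => ?_⟩
    rw [← h t ht, hext (i + t) (J i) (by omega) (by omega)]
    congr 1
    push_cast
    ring
  · obtain ⟨k, p, h⟩ := hx M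
    set j := Nat.pair k (p.natAbs + M + N) with hj
    have hφj : φ j = k := by simp [hφ, hj]
    have hjle : p.natAbs + M + N ≤ j := Nat.right_le_pair _ _
    have h3 : 1 * (j + 5) ≤ n * (j + 5) := Nat.mul_le_mul_right _ hn
    have h4 : 1 * (j + 4) ≤ n * (j + 4) := Nat.mul_le_mul_right _ hn
    have h5 := hTsucc j
    have h6 := hTle j
    refine ⟨((T j + n * (j + 4) : ℕ) + p).toNat, by omega, fun t ht => ?_⟩
    rw [hext _ j (by omega) (by omega), hφj, ← h t ht]
    congr 1
    omega

/-- Combination of `exists_unimodal` and `exists_word`: a closed set `X` of one-sided sequences in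
which the right halves of the sequences `e k` are dense is an omega-limit set. -/
theorem exists_unimodal_of_dense {S : Type} [TopologicalSpace S] [DiscreteTopology S] [Finite S]
    {n : ℕ} (hn : 0 < n) (α : ℤ → S) (hα : ∀ p, α (p + n) = α p)
    (e : ℕ → ℤ → S) (L : ℕ → ℕ) (hneg : ∀ k p, p < 0 → e k p = α p)
    (hpos : ∀ k p, (L k : ℤ) ≤ p → e k p = α (p - L k))
    (X : Set (ℕ → S)) (hX : IsClosed X) (heX : ∀ k p, half (e k) p ∈ X)
    (hXe : ∀ x ∈ X, ∀ M : ℕ, ∃ (k : ℕ) (p : ℤ), ∀ t < M, e k (p + (t : ℕ)) = x t)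
    (ell : S → Bool) (hnz : ∀ k p, ∃ t : ℕ, t < 4 ∧ ell (e k (p + t)) = true)
    (hinj : ∀ x ∈ X, ∀ y ∈ X, (∀ t, ell (x t) = ell (y t)) → x = y) :
    ∃ (f : unitI → unitI) (c : unitI), Unimodal f c ∧ LEO f ∧
      Nonempty (X ≃ₜ omegaLimitSet f c) ∧ Nonempty (Bi X ≃ₜ Inhom f c) := by
  obtain ⟨w, hw, hOm⟩ := exists_word hn α hα e L hneg hpos
  have hXO : Om w = X := by
    ext x
    rw [hOm]
    refine ⟨fun h => ?_, fun hx => hXe x hx⟩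
    by_contra hx
    obtain ⟨M, hM⟩ := exists_prefix_window hX.isOpen_compl hx
    obtain ⟨k, p, hkp⟩ := h M
    exact hM (half (e k) p) hkp (heX k p)
  subst hXO
  refine exists_unimodal w ell (fun i => ?_) hinj
  obtain ⟨k, p, h⟩ := hw i
  obtain ⟨t, ht, h'⟩ := hnz k p
  refine ⟨t, ht, ?_⟩
  change ell (w (i + t)) = true
  rw [h t ht, h']

lemma isClosed_of_windows {J S : Type} [TopologicalSpace S] [DiscreteTopology S]
    {K : Set (J → S)} (h : ∀ x ∉ K, ∃ F : Finset J, ∀ y, (∀ t ∈ F, y t = x t) → y ∉ K) :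
    IsClosed K := by
  rw [← isOpen_compl_iff, isOpen_iff_forall_mem_open]
  intro x hx
  obtain ⟨F, hF⟩ := h x hx
  exact ⟨_, fun y hy => hF y hy, isOpen_window F x, fun t _ => rfl⟩

/-! ### Equal multiplicities: periodic sequences with at most two flags -/

section Flags
variable {n : ℕ} {J : Type}

/-- Sequences of phases in `ℤ/n` that advance along `c` (the cast of `ℕ` or `ℤ`), decorated with
at most two flags, all of them at phase `0`. -/
def FlagSet (c : J → ZMod n) : Set (J → ZMod n × Bool) :=
  {x | (∀ i j, (x i).1 - c i = (x j).1 - c j) ∧ (∀ i, (x i).2 = true → (x i).1 = 0) ∧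
    ∀ i j k, (x i).2 = true → (x j).2 = true → (x k).2 = true → i = j ∨ i = k ∨ j = k}

lemma isClosed_flagSet (c : J → ZMod n) : IsClosed (FlagSet c) := by
  classical
  refine isClosed_of_windows fun x hx => ?_
  by_cases h1 : ∀ i j, (x i).1 - c i = (x j).1 - c j
  swap
  · push Not at h1
    obtain ⟨i, j, h⟩ := h1
    refine ⟨{i, j}, fun y hy hyK => h ?_⟩
    rw [← hy i (by simp), ← hy j (by simp)]
    exact hyK.1 i j
  by_cases h2 : ∀ i, (x i).2 = true → (x i).1 = 0
  swap
  · push Not at h2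
    obtain ⟨i, h, h'⟩ := h2
    refine ⟨{i}, fun y hy hyK => h' ?_⟩
    rw [← hy i (by simp)] at h ⊢
    exact hyK.2.1 i h
  have h3 : ¬ ∀ i j k, (x i).2 = true → (x j).2 = true → (x k).2 = true →
      i = j ∨ i = k ∨ j = k := fun h => hx ⟨h1, h2, h⟩
  push Not at h3
  obtain ⟨i, j, k, hi, hj, hk, h⟩ := h3
  refine ⟨{i, j, k}, fun y hy hyK => ?_⟩
  rw [← hy i (by simp)] at hi
  rw [← hy j (by simp)] at hj
  rw [← hy k (by simp)] at hk
  rcases hyK.2.2 i j k hi hj hk with h' | h' | h'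
  · exact h.1 h'
  · exact h.2.1 h'
  · exact h.2.2 h'

lemma FlagSet.ext {c : J → ZMod n} {x y : J → ZMod n × Bool} (hx : x ∈ FlagSet c)
    (hy : y ∈ FlagSet c) {i : J} (hi : (x i).1 = (y i).1)
    (h : ∀ j, (x j).2 = true ↔ (y j).2 = true) : x = y := by
  funext j
  refine Prod.ext ?_ (Bool.eq_iff_iff.2 (h j))
  have h1 := hx.1 i j
  have h2 := hy.1 i j
  rw [hi] at h1
  exact sub_left_injective (h1.symm.trans h2)

/-- The space of flagged sequences has type `ω² · n + 1`: the rank-two points are the sequences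
without flags, and the rank-one points those with exactly one flag. -/
theorem homeoOrd_flagSet [NeZero n] [Countable J] [Nonempty J] (c : J → ZMod n)
    (hc : ∀ (a : ZMod n) (F : Finset J), ∃ j ∉ F, c j = a) :
    HomeoOrd (FlagSet c) (Ordinal.omega0.{u} ^ (2 : Ordinal) * n) := by
  classical
  -- the sequence of phase `a` with flags in `A`
  let mk : ZMod n → Set J → J → ZMod n × Bool := fun a A j => (a + c j, decide (j ∈ A))
  have hmk : ∀ (a : ZMod n) (i j : J), a + c i = 0 → a + c j = 0 →
      ∀ A ⊆ ({i, j} : Set J), mk a A ∈ FlagSet c := by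
    intro a i j hi hj A hA
    refine ⟨fun i j => by simp [mk], fun k hk => ?_, fun k l m hk hl hm => ?_⟩
    · rcases hA (of_decide_eq_true hk) with rfl | rfl
      · exact hi
      · exact hj
    · rcases hA (of_decide_eq_true hk) with rfl | rfl <;>
      rcases hA (of_decide_eq_true hl) with rfl | rfl <;>
      rcases hA (of_decide_eq_true hm) with rfl | rfl <;> simp
  -- two flags determine the sequence
  have hWI : ∀ x ∈ FlagSet c, ∀ i j, i ≠ j → (x i).2 = true → (x j).2 = true →
      WIso (FlagSet c) x := by
    intro x hx i j hij hi hj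
    refine ⟨{i, j}, fun y hy hyx => ?_⟩
    have hyi := hyx i (by simp)
    have hyj := hyx j (by simp)
    refine FlagSet.ext hy hx (i := i) (by rw [hyi]) fun k => ?_
    have key : ∀ z ∈ FlagSet c, (z i).2 = true → (z j).2 = true →
        ((z k).2 = true ↔ k = i ∨ k = j) := by
      intro z hz h1 h2
      constructor
      · intro h3
        rcases hz.2.2 i j k h1 h2 h3 with h | h | h
        · exact absurd h hij
        · exact Or.inl h.symm
        · exact Or.inr h.symm
      · rintro (rfl | rfl) <;> assumption
    rw [key y hy (by rw [hyi, hi]) (by rw [hyj, hj]), key x hx hi hj]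
  have hcard := homeoOrd_of_windows (τ := ZMod n) (FlagSet c) (isClosed_flagSet c)
    (fun a => mk a ∅) ?_ ?_ {x | x ∈ FlagSet c ∧ ∃ j, ∀ i, (x i).2 = true ↔ i = j} ?_ ?_ ?_ ?_ ?_ ?_
  · rwa [ZMod.card] at hcard
  · intro a
    obtain ⟨j, -, hj⟩ := hc (-a) ∅
    exact hmk a j j (by simp [hj]) (by simp [hj]) _ (empty_subset _)
  · intro a b h
    have := congrArg Prod.fst (congrFun h (Classical.arbitrary J))
    exact add_right_cancel this
  · exact fun x hx => hx.1
  · rintro a ⟨-, j, hj⟩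
    have := (hj j).2 rfl
    simp [mk] at this
  · intro x hx
    by_cases h0 : ∃ i, (x i).2 = true
    · obtain ⟨i, hi⟩ := h0
      by_cases h1 : ∃ j, i ≠ j ∧ (x j).2 = true
      · obtain ⟨j, hij, hj⟩ := h1
        exact Or.inr (Or.inr (hWI x hx i j hij hi hj))
      · push Not at h1
        refine Or.inr (Or.inl ⟨hx, i, fun j => ⟨fun h => ?_, fun h => h ▸ hi⟩⟩)
        by_contra hne
        exact h1 j (Ne.symm hne) h
    · left
      push Not at h0
      refine ⟨(x (Classical.arbitrary J)).1 - c (Classical.arbitrary J), funext fun j => ?_⟩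
      refine Prod.ext ?_ ?_
      · change _ - _ + c j = _
        rw [hx.1 _ j]
        ring
      · simpa [mk] using (h0 j).symm
  · rintro x ⟨hx, j, hj⟩
    refine ⟨{j}, fun y hy hyx => ?_⟩
    have hyj := hyx j (by simp)
    have hyj2 : (y j).2 = true := by rw [hyj, hj]
    by_cases h1 : ∃ i, j ≠ i ∧ (y i).2 = true
    · obtain ⟨i, hij, hi⟩ := h1
      exact Or.inr (hWI y hy j i hij hyj2 hi)
    · push Not at h1
      refine Or.inl (FlagSet.ext hy hx (i := j) (by rw [hyj]) fun i => ?_)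
      rw [hj]
      refine ⟨fun h => ?_, fun h => h ▸ hyj2⟩
      by_contra hne
      exact h1 i (Ne.symm hne) h
  · rintro x ⟨hx, j, hj⟩ F
    obtain ⟨i, hiF, hi⟩ := hc (-((x j).1 - c j)) (insert j F)
    rw [Finset.mem_insert, not_or] at hiF
    have hj0 := hx.2.1 j ((hj j).2 rfl)
    refine ⟨mk ((x j).1 - c j) {i, j}, hmk _ i j (by rw [hi]; ring) (by rw [← hj0]; ring) _
      Subset.rfl, fun h => ?_, fun t ht => ?_⟩
    · have : (mk ((x j).1 - c j) {i, j} i).2 = true := by simp [mk]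
      rw [h, hj] at this
      exact hiF.1 this
    · refine Prod.ext ?_ ?_
      · change _ - _ + c t = _
        rw [hx.1 j t]
        ring
      · rw [Bool.eq_iff_iff, hj]
        have : t ≠ i := fun h => hiF.2 (h ▸ ht)
        simp [mk, this]
  · intro a F
    obtain ⟨i, hiF, hi⟩ := hc (-a) F
    refine ⟨mk a {i}, ⟨hmk a i i (by simp [hi]) (by simp [hi]) _ (by simp), i, fun j => ?_⟩,
      fun t ht => ?_⟩
    · simp [mk]
    · have : t ≠ i := fun h => hiF (h ▸ ht)
      simp [mk, this]

end Flags

lemma exists_nat_cast_eq {n : ℕ} [NeZero n] (a : ZMod n) (N : ℕ) :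
    ∃ t : ℕ, N ≤ t ∧ (t : ZMod n) = a := by
  refine ⟨a.val + n * N, ?_, by simp⟩
  have : 1 * N ≤ n * N := Nat.mul_le_mul_right _ (NeZero.pos n)
  omega

lemma Bi_flagSet {n : ℕ} : Bi (FlagSet fun t : ℕ => (t : ZMod n)) =
    FlagSet fun p : ℤ => (p : ZMod n) := by
  ext z
  have hz : ∀ {p q : ℤ}, p ≤ q → z q = half z p (q - p).toNat := by
    intro p q h
    simp only [half]
    congr 1
    omega
  have hcast : ∀ {p q : ℤ}, p ≤ q → (((q - p).toNat : ℕ) : ZMod n) = (q : ZMod n) - p := by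
    intro p q h
    rw [← Int.cast_natCast, Int.toNat_of_nonneg (by omega)]
    push_cast
    rfl
  constructor
  · intro h
    refine ⟨fun i j => ?_, fun i hi => ?_, fun i j k hi hj hk => ?_⟩
    · have h1 := (h (min i j)).1 (i - min i j).toNat (j - min i j).toNat
      simp only [hcast (min_le_left i j), hcast (min_le_right i j),
        ← hz (min_le_left i j), ← hz (min_le_right i j)] at h1
      linear_combination h1
    · have := (h i).2.1 0
      simp only [half, Nat.cast_zero, add_zero] at this
      exact this hi
    · have hi' : min i (min j k) ≤ i := min_le_left _ _
      have hj' : min i (min j k) ≤ j := (min_le_right _ _).trans (min_le_left _ _)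
      have hk' : min i (min j k) ≤ k := (min_le_right _ _).trans (min_le_right _ _)
      rw [hz hi'] at hi
      rw [hz hj'] at hj
      rw [hz hk'] at hk
      have := (h _).2.2 _ _ _ hi hj hk
      omega
  · intro h p
    refine ⟨fun i j => ?_, fun i hi => h.2.1 _ hi, fun i j k hi hj hk => ?_⟩
    · have := h.1 (p + i) (p + j)
      simp only [half]
      push_cast at this
      linear_combination this
    · have := h.2.2 _ _ _ hi hj hk
      omega

lemma FlagSet.eventually_no_flag {n : ℕ} {c : ℕ → ZMod n} {x : ℕ → ZMod n × Bool}
    (hx : x ∈ FlagSet c) : ∃ N, ∀ t, N ≤ t → (x t).2 = false := by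
  by_contra hcon
  push Not at hcon
  simp only [ne_eq, Bool.not_eq_false] at hcon
  obtain ⟨i, -, hi⟩ := hcon 0
  obtain ⟨j, hj', hj⟩ := hcon (i + 1)
  obtain ⟨k, hk', hk⟩ := hcon (j + 1)
  have := hx.2.2 i j k hi hj hk
  omega

/-- The case of equal multiplicities. -/
theorem exists_equal (n : ℕ) (hn : 0 < n) :
    ∃ (f : unitI → unitI) (c : unitI), Unimodal f c ∧ LEO f ∧
      HomeoOrd (omegaLimitSet f c) (Ordinal.omega0.{u} ^ (2 : Ordinal) * n) ∧
      HomeoOrd (Inhom f c) (Ordinal.omega0.{v} ^ (2 : Ordinal) * n) := by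
  have : NeZero n := ⟨hn.ne'⟩
  let α : ℤ → ZMod n × Bool := fun p => (p, false)
  -- two flags at distance `n * (k + 1)`
  let e : ℕ → ℤ → ZMod n × Bool := fun k p => (p, decide (p = 0 ∨ p = (n * (k + 1) : ℕ)))
  let L : ℕ → ℕ := fun k => n * (k + 2)
  let ell : ZMod n × Bool → Bool := fun a =>
    if n = 1 then !a.2 else (decide (a.1 ≠ 0) || a.2)
  have hL : ∀ k : ℕ, n * (k + 1) < L k := fun k => Nat.mul_lt_mul_of_pos_left (by omega) hn
  have heflag : ∀ (k : ℕ) (p : ℤ), (e k p).2 = true ↔ p = 0 ∨ p = (n * (k + 1) : ℕ) := by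
    intro k p
    simp [e]
  have main := exists_unimodal_of_dense (n := n) hn α ?_ e L ?_ ?_
    (FlagSet fun t : ℕ => (t : ZMod n)) (isClosed_flagSet _) ?_ ?_ ell ?_ ?_
  · obtain ⟨f, c, h1, h2, ⟨h3⟩, ⟨h4⟩⟩ := main
    refine ⟨f, c, h1, h2, ?_, ?_⟩
    · obtain ⟨g⟩ := homeoOrd_flagSet.{u} (fun t : ℕ => (t : ZMod n)) fun a F => by
        obtain ⟨M, hM⟩ := F.exists_nat_subset_range
        obtain ⟨t, ht, hta⟩ := exists_nat_cast_eq a M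
        refine ⟨t, fun h => ?_, hta⟩
        have := Finset.mem_range.1 (hM h)
        omega
      exact ⟨h3.symm.trans g⟩
    · rw [Bi_flagSet] at h4
      obtain ⟨g⟩ := homeoOrd_flagSet.{v} (fun p : ℤ => (p : ZMod n)) fun a F => by
        obtain ⟨M, hM⟩ := (F.image Int.natAbs).exists_nat_subset_range
        obtain ⟨t, ht, hta⟩ := exists_nat_cast_eq a M
        refine ⟨(t : ℤ), fun h => ?_, by simpa using hta⟩
        have := Finset.mem_range.1 (hM (Finset.mem_image_of_mem _ h))
        simp at this
        omega
      exact ⟨h4.symm.trans g⟩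
  · intro p
    simp [α]
  · intro k p hp
    simp only [e, α]
    congr 1
    rw [decide_eq_false_iff_not]
    omega
  · intro k p hp
    have := hL k
    refine Prod.ext ?_ ?_
    · simp [e, α, L]
    · simp only [e, α]
      rw [decide_eq_false_iff_not]
      omega
  · intro k p
    refine ⟨fun i j => ?_, fun i hi => ?_, fun i j l hi hj hl => ?_⟩
    · simp [half, e]
    · rcases (heflag _ _).1 hi with h | h
      · simp only [half, e, h]
        simp
      · simp only [half, e, h]
        simp
    · simp only [half, heflag] at hi hj hl
      omega
  · intro x hx M
    have hph : ∀ i j, (x j).1 = (x i).1 - (i : ZMod n) + j := by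
      intro i j
      linear_combination -hx.1 i j
    by_cases h0 : ∃ i, (x i).2 = true
    · obtain ⟨i, hi⟩ := h0
      have hi0 := hx.2.1 i hi
      by_cases h1 : ∃ j, i ≠ j ∧ (x j).2 = true
      · -- two flags
        have main : ∀ i j : ℕ, i < j → (x i).2 = true → (x j).2 = true →
            ∃ (k : ℕ) (p : ℤ), ∀ t < M, e k (p + (t : ℕ)) = x t := by
          intro i j hij hi hj
          have hi0 := hx.2.1 i hi
          have hj0 := hx.2.1 j hj
          have hd : n ∣ j - i := by
            rw [← ZMod.natCast_eq_zero_iff, Nat.cast_sub hij.le]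
            have := hph i j
            rw [hi0, hj0] at this
            linear_combination -this
          obtain ⟨k, hk⟩ := hd
          obtain ⟨k, rfl⟩ : ∃ k', k = k' + 1 := ⟨k - 1, by
            have : k ≠ 0 := by
              rintro rfl
              omega
            omega⟩
          refine ⟨k, -i, fun t _ => Prod.ext ?_ ?_⟩
          · simp only [e]
            rw [hph i t, hi0]
            push_cast
            ring
          · rw [Bool.eq_iff_iff, heflag, ← hk]
            constructor
            · rintro (h | h)
              · obtain rfl : t = i := by omega
                exact hi
              · obtain rfl : t = j := by omega
                exact hj
            · intro h
              have := hx.2.2 i j t hi hj h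
              omega
        obtain ⟨j, hij, hj⟩ := h1
        rcases lt_or_gt_of_ne hij with h | h
        · exact main i j h hi hj
        · exact main j i h hj hi
      · -- one flag: the second flag of `e M` is out of sight
        push Not at h1
        refine ⟨M, -i, fun t ht => Prod.ext ?_ ?_⟩
        · simp only [e]
          rw [hph i t, hi0]
          push_cast
          ring
        · rw [Bool.eq_iff_iff, heflag]
          have : 1 * (M + 1) ≤ n * (M + 1) := Nat.mul_le_mul_right _ hn
          constructor
          · intro h
            obtain rfl : t = i := by omega
            exact hi
          · intro h
            by_contra hcon
            exact h1 t (by omega) h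
    · push Not at h0
      obtain ⟨a, ha, ha'⟩ := exists_nat_cast_eq (x 0).1 (L 0)
      refine ⟨0, a, fun t _ => Prod.ext ?_ ?_⟩
      · simp only [e]
        rw [hph 0 t, ← ha']
        push_cast
        ring
      · have h1 := hL 0
        have h2 := heflag 0 (a + t)
        have h3 : ¬ ((a : ℤ) + t = 0 ∨ (a : ℤ) + t = (n * (0 + 1) : ℕ)) := by omega
        rw [Bool.eq_iff_iff, h2]
        exact ⟨fun h => absurd h h3, fun h => absurd h (h0 t)⟩
  · intro k p
    by_cases h1 : n = 1
    · have key : ∃ t : ℕ, t < 4 ∧ ¬ (p + t = 0 ∨ p + t = (n * (k + 1) : ℕ)) := by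
        by_contra hcon
        push Not at hcon
        have a0 := hcon 0 (by omega)
        have a1 := hcon 1 (by omega)
        have a2 := hcon 2 (by omega)
        omega
      obtain ⟨t, ht, h⟩ := key
      refine ⟨t, ht, ?_⟩
      simp only [ell, if_pos h1, e]
      simpa using h
    · have hne : (1 : ZMod n) ≠ 0 := by
        have : Fact (1 < n) := ⟨by omega⟩
        exact one_ne_zero
      by_cases h2 : (p : ZMod n) = 0
      · refine ⟨1, by omega, ?_⟩
        simp [ell, h1, e, h2, hne]
      · refine ⟨0, by omega, ?_⟩
        simp [ell, h1, e, h2]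
  · intro x hx y hy hxy
    by_cases h1 : n = 1
    · subst h1
      refine FlagSet.ext hx hy (i := 0) (Subsingleton.elim _ _) fun j => ?_
      have := hxy j
      simp only [ell, if_true] at this
      rw [Bool.not_inj this]
    · -- zeros far out reveal the phase
      obtain ⟨N, hN⟩ := FlagSet.eventually_no_flag hx
      obtain ⟨N', hN'⟩ := FlagSet.eventually_no_flag hy
      obtain ⟨t, ht, hta⟩ := exists_nat_cast_eq (-(x 0).1) (N + N')
      have hxt : (x t).1 = 0 := by
        have := hx.1 0 t
        simp only [Nat.cast_zero, hta] at this
        linear_combination -this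
      have hyt : (y t).1 = 0 := by
        have := hxy t
        simpa [ell, h1, hN t (by omega), hN' t (by omega), hxt] using this
      have hph : ∀ j, (x j).1 = (y j).1 := by
        intro j
        have a1 := hx.1 t j
        have a2 := hy.1 t j
        rw [hxt] at a1
        rw [hyt] at a2
        linear_combination a2 - a1
      refine FlagSet.ext hx hy (i := 0) (hph 0) fun j => ?_
      by_cases hj : (x j).1 = 0
      · have hj' := (hph j).symm.trans hj
        have := hxy j
        simp only [ell, if_neg h1, hj, hj'] at this
        simp only [ne_eq, not_true_eq_false, decide_false, Bool.false_or] at this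
        rw [this]
      · have hj' : (y j).1 ≠ 0 := by rwa [← hph j]
        exact ⟨fun h => absurd (hx.2.1 j h) hj, fun h => absurd (hy.2.1 j h) hj'⟩

/-! ### Different multiplicities: paths through two cycles -/

section Paths
variable {n l : ℕ}

/-- The edges of a graph consisting of a cycle of length `n` (the states `inl i`), a cycle of
length `l` (the states `inr j`), and one transition from the end of each cycle to the beginning
of the other. -/
def Step : ZMod n ⊕ ZMod l → ZMod n ⊕ ZMod l → Prop
  | .inl i, .inl i' => i' = i + 1
  | .inl i, .inr j => i + 1 = 0 ∧ j = 0
  | .inr j, .inr j' => j' = j + 1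
  | .inr j, .inl i => j + 1 = 0 ∧ i = 0

/-- The paths, indexed by `ℕ` or `ℤ`, that do not return to the second cycle after having left
it. -/
def PathSet (n l : ℕ) (J : Type) [LinearOrder J] [Add J] [One J] :
    Set (J → ZMod n ⊕ ZMod l) :=
  {x | (∀ i, Step (x i) (x (i + 1))) ∧
    ∀ i j k, i < j → j < k → (x i).isRight = true → (x k).isRight = true →
      (x j).isRight = true}

lemma isClosed_pathSet {J : Type} [LinearOrder J] [Add J] [One J] :
    IsClosed (PathSet n l J) := by
  classical
  refine isClosed_of_windows fun x hx => ?_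
  by_cases h1 : ∀ i, Step (x i) (x (i + 1))
  swap
  · push Not at h1
    obtain ⟨i, h⟩ := h1
    refine ⟨{i, i + 1}, fun y hy hyK => h ?_⟩
    rw [← hy i (by simp), ← hy (i + 1) (by simp)]
    exact hyK.1 i
  have h3 : ¬ ∀ i j k, i < j → j < k → (x i).isRight = true → (x k).isRight = true →
      (x j).isRight = true := fun h => hx ⟨h1, h⟩
  push Not at h3
  obtain ⟨i, j, k, hij, hjk, hi, hk, hj⟩ := h3
  refine ⟨{i, j, k}, fun y hy hyK => hj ?_⟩
  rw [← hy i (by simp)] at hi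
  rw [← hy k (by simp)] at hk
  rw [← hy j (by simp)]
  exact hyK.2 i j k hij hjk hi hk

lemma step_right_unique {s a b : ZMod n ⊕ ZMod l} (ha : Step s a) (hb : Step s b)
    (h : a.isRight = b.isRight) : a = b := by
  rcases s with s | s <;> rcases a with a | a <;> rcases b with b | b <;>
    simp_all [Step]

lemma step_left_unique {s a b : ZMod n ⊕ ZMod l} (ha : Step a s) (hb : Step b s)
    (h : a.isRight = b.isRight) : a = b := by
  rcases s with s | s <;> rcases a with a | a <;> rcases b with b | b <;>
    simp_all [Step]
  all_goals first | linear_combination hb - ha.1 | linear_combination ha.1 - hb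

lemma path_eq_iff {J : Type} [Add J] [One J] {x y : J → ZMod n ⊕ ZMod l}
    (hx : ∀ i, Step (x i) (x (i + 1))) (hy : ∀ i, Step (y i) (y (i + 1)))
    (h : ∀ j, (x j).isRight = (y j).isRight) (i : J) : x i = y i ↔ x (i + 1) = y (i + 1) := by
  constructor
  · intro hi
    have h1 := hx i
    rw [hi] at h1
    exact step_right_unique h1 (hy i) (h _)
  · intro hi
    have h1 := hx i
    rw [hi] at h1
    exact step_left_unique h1 (hy i) (h _)

/-- A path is determined by one state and by the cycles it visits at each time. -/
lemma path_ext_nat {x y : ℕ → ZMod n ⊕ ZMod l}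
    (hx : ∀ i, Step (x i) (x (i + 1))) (hy : ∀ i, Step (y i) (y (i + 1))) {i : ℕ}
    (hi : x i = y i) (h : ∀ j, (x j).isRight = (y j).isRight) : x = y := by
  have h0 : x 0 = y 0 := by
    induction i with
    | zero => exact hi
    | succ i ih => exact ih ((path_eq_iff hx hy h i).2 hi)
  funext j
  induction j with
  | zero => exact h0
  | succ j ih => exact (path_eq_iff hx hy h j).1 ih

lemma path_ext_int {x y : ℤ → ZMod n ⊕ ZMod l}
    (hx : ∀ i, Step (x i) (x (i + 1))) (hy : ∀ i, Step (y i) (y (i + 1))) {i : ℤ}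
    (hi : x i = y i) (h : ∀ j, (x j).isRight = (y j).isRight) : x = y := by
  funext j
  induction j using Int.inductionOn' (b := i) with
  | zero => exact hi
  | succ k _ ih => exact (path_eq_iff hx hy h k).1 ih
  | pred k _ ih =>
    have := path_eq_iff hx hy h (k - 1)
    rw [sub_add_cancel] at this
    exact this.2 ih

lemma run_right {y : ℕ → ZMod n ⊕ ZMod l} (hy : ∀ i, Step (y i) (y (i + 1))) {v : ZMod l}
    (h0 : y 0 = .inr v) (T : ℕ) (h : ∀ t ≤ T, (y t).isRight = true) :
    y T = .inr (v + T) := by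
  induction T with
  | zero => simpa using h0
  | succ T ih =>
    have h1 := ih fun t ht => h t (by omega)
    have h2 := hy T
    obtain ⟨u, hu⟩ := Sum.isRight_iff.1 (h (T + 1) le_rfl)
    rw [h1, hu] at h2
    simp only [Step] at h2
    rw [hu, h2]
    push_cast
    rw [add_assoc]

lemma run_left {y : ℕ → ZMod n ⊕ ZMod l} (hy : ∀ i, Step (y i) (y (i + 1))) {v : ZMod n}
    (h0 : y 0 = .inl v) (T : ℕ) (h : ∀ t ≤ T, (y t).isRight = false) :
    y T = .inl (v + T) := by
  induction T with
  | zero => simpa using h0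
  | succ T ih =>
    have h1 := ih fun t ht => h t (by omega)
    have h2 := hy T
    have h3 := h (T + 1) le_rfl
    cases hu : y (T + 1) with
    | inr u => simp [hu] at h3
    | inl u =>
      rw [h1, hu] at h2
      simp only [Step] at h2
      rw [h2]
      push_cast
      rw [add_assoc]

lemma PathSet.half {z : ℤ → ZMod n ⊕ ZMod l} (hz : z ∈ PathSet n l ℤ) (p : ℤ) :
    half z p ∈ PathSet n l ℕ := by
  refine ⟨fun i => ?_, fun i j k hij hjk hi hk => ?_⟩
  · have := hz.1 (p + i)
    simp only [_root_.half]
    push_cast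
    rwa [← add_assoc]
  · exact hz.2 (p + i) (p + j) (p + k) (by omega) (by omega) hi hk

lemma Bi_pathSet : Bi (PathSet n l ℕ) = PathSet n l ℤ := by
  ext z
  refine ⟨fun h => ⟨fun i => ?_, fun i j k hij hjk hi hk => ?_⟩, fun h p => PathSet.half h p⟩
  · have := (h i).1 0
    simpa [_root_.half] using this
  · have := (h i).2 0 (j - i).toNat (k - i).toNat (by omega) (by omega)
    simp only [_root_.half, Nat.cast_zero, add_zero] at this
    rw [show i + ((j - i).toNat : ℤ) = j by omega, show i + ((k - i).toNat : ℤ) = k by omega]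
      at this
    exact this hi hk

/-- Two consecutive states where the path leaves the second cycle. -/
def Down {J : Type} [Add J] [One J] (x : J → ZMod n ⊕ ZMod l) (i : J) : Prop :=
  (x i).isRight = true ∧ (x (i + 1)).isRight = false

/-- Two consecutive states where the path enters the second cycle. -/
def Up {J : Type} [Add J] [One J] (x : J → ZMod n ⊕ ZMod l) (i : J) : Prop :=
  (x i).isRight = false ∧ (x (i + 1)).isRight = true

lemma Down.eq {J : Type} [Add J] [One J] {x : J → ZMod n ⊕ ZMod l}
    (hx : ∀ i, Step (x i) (x (i + 1))) {i : J} (h : Down x i) :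
    x i = .inr (-1) ∧ x (i + 1) = .inl 0 := by
  obtain ⟨h1, h2⟩ := h
  have h3 := hx i
  cases ha : x i with
  | inl a => simp [ha] at h1
  | inr a =>
    cases hb : x (i + 1) with
    | inr b => simp [hb] at h2
    | inl b =>
      rw [ha, hb] at h3
      exact ⟨by rw [eq_neg_of_add_eq_zero_left h3.1], by rw [h3.2]⟩

lemma Up.eq {J : Type} [Add J] [One J] {x : J → ZMod n ⊕ ZMod l}
    (hx : ∀ i, Step (x i) (x (i + 1))) {i : J} (h : Up x i) :
    x i = .inl (-1) ∧ x (i + 1) = .inr 0 := by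
  obtain ⟨h1, h2⟩ := h
  have h3 := hx i
  cases ha : x i with
  | inr a => simp [ha] at h1
  | inl a =>
    cases hb : x (i + 1) with
    | inl b => simp [hb] at h2
    | inr b =>
      rw [ha, hb] at h3
      exact ⟨by rw [eq_neg_of_add_eq_zero_left h3.1], by rw [h3.2]⟩

/-- Two paths may be spliced at an edge. -/
lemma step_splice_nat {x y : ℕ → ZMod n ⊕ ZMod l} (hx : ∀ i, Step (x i) (x (i + 1)))
    (hy : ∀ i, Step (y i) (y (i + 1))) (j : ℕ) (h : Step (x j) (y (j + 1))) (i : ℕ) :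
    Step (if i ≤ j then x i else y i) (if i + 1 ≤ j then x (i + 1) else y (i + 1)) := by
  rcases lt_trichotomy i j with h1 | rfl | h1
  · rw [if_pos h1.le, if_pos (by omega)]
    exact hx i
  · rw [if_pos le_rfl, if_neg (by omega)]
    exact h
  · rw [if_neg (by omega), if_neg (by omega)]
    exact hy i

lemma step_splice_int {x y : ℤ → ZMod n ⊕ ZMod l} (hx : ∀ i, Step (x i) (x (i + 1)))
    (hy : ∀ i, Step (y i) (y (i + 1))) (j : ℤ) (h : Step (x j) (y (j + 1))) (i : ℤ) :
    Step (if i ≤ j then x i else y i) (if i + 1 ≤ j then x (i + 1) else y (i + 1)) := by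
  rcases lt_trichotomy i j with h1 | rfl | h1
  · rw [if_pos h1.le, if_pos (by omega)]
    exact hx i
  · rw [if_pos le_rfl, if_neg (by omega)]
    exact h
  · rw [if_neg (by omega), if_neg (by omega)]
    exact hy i

end Paths

section PathsNat
variable {n l : ℕ}

lemma exists_down_nat {x : ℕ → ZMod n ⊕ ZMod l} {i j : ℕ} (hij : i ≤ j)
    (hi : (x i).isRight = true) (hj : (x j).isRight = false) : ∃ k, i ≤ k ∧ k < j ∧ Down x k := by
  induction j, hij using Nat.le_induction with
  | base => simp [hi] at hj
  | succ j hij ih =>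
    cases h : (x j).isRight
    · obtain ⟨k, h1, h2, h3⟩ := ih h
      exact ⟨k, h1, by omega, h3⟩
    · exact ⟨j, hij, by omega, h, hj⟩

lemma exists_up_nat {x : ℕ → ZMod n ⊕ ZMod l} {i j : ℕ} (hij : i ≤ j)
    (hi : (x i).isRight = false) (hj : (x j).isRight = true) : ∃ k, i ≤ k ∧ k < j ∧ Up x k := by
  induction j, hij using Nat.le_induction with
  | base => simp [hi] at hj
  | succ j hij ih =>
    cases h : (x j).isRight
    · exact ⟨j, hij, by omega, h, hj⟩
    · obtain ⟨k, h1, h2, h3⟩ := ih h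
      exact ⟨k, h1, by omega, h3⟩

lemma Down.left_after {x : ℕ → ZMod n ⊕ ZMod l} (hx : x ∈ PathSet n l ℕ) {i j : ℕ}
    (h : Down x i) (hij : i < j) : (x j).isRight = false := by
  by_contra hcon
  rw [Bool.not_eq_false] at hcon
  have hne : j ≠ i + 1 := by
    rintro rfl
    rw [h.2] at hcon
    exact Bool.false_ne_true hcon
  have := hx.2 i (i + 1) j (by omega) (by omega) h.1 hcon
  rw [h.2] at this
  exact Bool.false_ne_true this

lemma Down.isolated_nat {x : ℕ → ZMod n ⊕ ZMod l} (hx : x ∈ PathSet n l ℕ) {i : ℕ}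
    (h : Down x i) : WIso (PathSet n l ℕ) x := by
  refine ⟨Finset.range (i + 2), fun y hy hyx => ?_⟩
  have hag : ∀ t ≤ i + 1, y t = x t := fun t ht => hyx t (Finset.mem_range.2 (by omega))
  have hd : Down y i := by
    rw [Down, hag i (by omega), hag (i + 1) le_rfl]
    exact h
  refine path_ext_nat hy.1 hx.1 (hag 0 (by omega)) fun j => ?_
  rcases Nat.lt_or_ge i j with hj | hj
  · rw [hd.left_after hy hj, h.left_after hx hj]
  · rw [hag j (by omega)]

lemma right_after_nat {x : ℕ → ZMod n ⊕ ZMod l} (hd : ∀ i, ¬ Down x i) {i j : ℕ} (hij : i ≤ j)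
    (hi : (x i).isRight = true) : (x j).isRight = true := by
  by_contra hcon
  rw [Bool.not_eq_true] at hcon
  obtain ⟨k, -, -, hk⟩ := exists_down_nat hij hi hcon
  exact hd k hk

lemma run_right_from {x : ℕ → ZMod n ⊕ ZMod l} (hx : ∀ i, Step (x i) (x (i + 1))) {i : ℕ}
    {v : ZMod l} (hi : x i = .inr v) (t : ℕ) (h : ∀ s ≤ t, (x (i + s)).isRight = true) :
    x (i + t) = .inr (v + t) :=
  run_right (y := fun t => x (i + t)) (fun t => hx (i + t)) hi t h

lemma run_left_from {x : ℕ → ZMod n ⊕ ZMod l} (hx : ∀ i, Step (x i) (x (i + 1))) {i : ℕ}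
    {v : ZMod n} (hi : x i = .inl v) (t : ℕ) (h : ∀ s ≤ t, (x (i + s)).isRight = false) :
    x (i + t) = .inl (v + t) :=
  run_left (y := fun t => x (i + t)) (fun t => hx (i + t)) hi t h

/-- A path in the first cycle is a limit of paths that finally enter the second one. -/
lemma approx_left [NeZero n] {x : ℕ → ZMod n ⊕ ZMod l} (hx : x ∈ PathSet n l ℕ)
    (h : ∀ i, (x i).isRight = false) (M : ℕ) :
    ∃ y ∈ PathSet n l ℕ, (∃ i, (y i).isRight = true) ∧ (∀ i, ¬ Down y i) ∧
      ∀ t < M, y t = x t := by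
  obtain ⟨v, hv⟩ : ∃ v, x 0 = .inl v := by
    cases h0 : x 0 with
    | inl v => exact ⟨v, rfl⟩
    | inr v => simpa [h0] using h 0
  obtain ⟨j, hjM, hj⟩ := exists_nat_cast_eq (-1 - v) M
  have hxj : x j = .inl (-1) := by
    rw [run_left hx.1 hv j fun t _ => h t, hj]
    congr 1
    ring
  have hR : ∀ t, ((if t ≤ j then x t else
      (.inr ((t : ZMod l) - (j + 1)) : ZMod n ⊕ ZMod l)).isRight = true ↔ j < t) := by
    intro t
    split_ifs with ht
    · simp [h t, ht]
    · simpa using ht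
  refine ⟨fun t => if t ≤ j then x t else .inr ((t : ZMod l) - (j + 1)), ⟨?_, ?_⟩, ?_, ?_, ?_⟩
  · refine step_splice_nat hx.1 (y := fun t : ℕ => .inr ((t : ZMod l) - ((j : ZMod l) + 1)))
      (fun i => ?_) j ?_
    · simp only [Step]
      push_cast
      ring
    · rw [hxj]
      simp [Step]
  · intro i m k him hmk hi hk
    simp only [hR] at hi hk ⊢
    omega
  · exact ⟨j + 1, (hR _).2 (by omega)⟩
  · rintro i ⟨h1, h2⟩
    have h1' := (hR i).1 h1
    have h2' := (hR (i + 1)).2 (by omega)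
    simp only [h2'] at h2
    exact Bool.false_ne_true h2.symm
  · intro t ht
    simp only
    rw [if_pos (by omega)]

/-- A path that stays in the second cycle is a limit of paths that finally leave it. -/
lemma approx_right [NeZero l] {x : ℕ → ZMod n ⊕ ZMod l} (hx : x ∈ PathSet n l ℕ) {i : ℕ}
    (hi : (x i).isRight = true) (hd : ∀ i, ¬ Down x i) (M : ℕ) :
    ∃ y ∈ PathSet n l ℕ, (∃ i, Down y i) ∧ ∀ t < M, y t = x t := by
  obtain ⟨v, hv⟩ := Sum.isRight_iff.1 hi
  obtain ⟨t, htM, ht⟩ := exists_nat_cast_eq (-1 - v) M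
  have hxj : x (i + t) = .inr (-1) := by
    rw [run_right_from hx.1 hv t fun s _ => right_after_nat hd (by omega) hi, ht]
    congr 1
    ring
  obtain ⟨j, hj⟩ : ∃ j, j = i + t := ⟨_, rfl⟩
  rw [← hj] at hxj
  refine ⟨fun t => if t ≤ j then x t else .inl ((t : ZMod n) - (j + 1)), ⟨?_, ?_⟩, ⟨j, ?_⟩, ?_⟩
  · refine step_splice_nat hx.1 (y := fun t : ℕ => .inl ((t : ZMod n) - ((j : ZMod n) + 1)))
      (fun i => ?_) j ?_
    · simp only [Step]
      push_cast
      ring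
    · rw [hxj]
      simp [Step]
  · intro a b k hab hbk ha hk
    have hkj : k ≤ j := by
      by_contra hcon
      simp [hcon] at hk
    simp only [if_pos hkj, if_pos (show a ≤ j by omega), if_pos (show b ≤ j by omega)] at ha hk ⊢
    exact hx.2 a b k hab hbk ha hk
  · simp [Down, hxj]
  · intro t ht
    simp only
    rw [if_pos (by omega)]

lemma approx_down [NeZero n] [NeZero l] {x : ℕ → ZMod n ⊕ ZMod l} (hx : x ∈ PathSet n l ℕ)
    (M : ℕ) : ∃ y ∈ PathSet n l ℕ, (∃ i, Down y i) ∧ ∀ t < M, y t = x t := by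
  by_cases hd : ∃ i, Down x i
  · exact ⟨x, hx, hd, fun t _ => rfl⟩
  push Not at hd
  by_cases hr : ∃ i, (x i).isRight = true
  · obtain ⟨i, hi⟩ := hr
    exact approx_right hx hi hd M
  · push Not at hr
    simp only [ne_eq, Bool.not_eq_true] at hr
    obtain ⟨y, hy, ⟨i, hi⟩, hyd, hyx⟩ := approx_left hx hr M
    obtain ⟨y', hy', hd', hyy⟩ := approx_right hy hi hyd M
    exact ⟨y', hy', hd', fun t ht => (hyy t ht).trans (hyx t ht)⟩

/-- The one-sided paths form a space of type `ω² · n + 1`: the rank-two points are the paths in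
the first cycle, and the rank-one points those that stay in the second cycle. -/
theorem homeoOrd_pathSet_nat [NeZero n] [NeZero l] :
    HomeoOrd (PathSet n l ℕ) (Ordinal.omega0.{u} ^ (2 : Ordinal) * n) := by
  have hrange : ∀ F : Finset ℕ, ∃ M, ∀ t ∈ F, t < M := fun F => by
    obtain ⟨M, hM⟩ := F.exists_nat_subset_range
    exact ⟨M, fun t ht => Finset.mem_range.1 (hM ht)⟩
  have hp : ∀ v : ZMod n, (fun t : ℕ => (.inl (v + t) : ZMod n ⊕ ZMod l)) ∈ PathSet n l ℕ := by
    intro v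
    refine ⟨fun i => ?_, fun i j k _ _ hi _ => by simp at hi⟩
    simp only [Step]
    push_cast
    ring
  have hcard := homeoOrd_of_windows (τ := ZMod n) (PathSet n l ℕ) isClosed_pathSet
    (fun v t => .inl (v + t)) hp ?_
    {x | x ∈ PathSet n l ℕ ∧ (∃ i, (x i).isRight = true) ∧ ∀ i, ¬ Down x i} ?_ ?_ ?_ ?_ ?_ ?_
  · rwa [ZMod.card] at hcard
  · intro a b h
    simpa using congrFun h 0
  · exact fun x hx => hx.1
  · rintro v ⟨-, ⟨i, hi⟩, -⟩
    simp at hi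
  · intro x hx
    by_cases hd : ∃ i, Down x i
    · obtain ⟨i, hi⟩ := hd
      exact Or.inr (Or.inr (hi.isolated_nat hx))
    push Not at hd
    by_cases hr : ∃ i, (x i).isRight = true
    · exact Or.inr (Or.inl ⟨hx, hr, hd⟩)
    · push Not at hr
      simp only [ne_eq, Bool.not_eq_true] at hr
      left
      cases h0 : x 0 with
      | inl v => exact ⟨v, funext fun t => (run_left hx.1 h0 t fun t _ => hr t).symm⟩
      | inr v => simpa [h0] using hr 0
  · rintro x ⟨hx, ⟨i, hi⟩, hd⟩
    refine ⟨Finset.range (i + 1), fun y hy hyx => ?_⟩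
    have hag : ∀ t ≤ i, y t = x t := fun t ht => hyx t (Finset.mem_range.2 (by omega))
    by_cases hyd : ∃ i, Down y i
    · obtain ⟨j, hj⟩ := hyd
      exact Or.inr (hj.isolated_nat hy)
    · push Not at hyd
      refine Or.inl (path_ext_nat hy.1 hx.1 (hag 0 (by omega)) fun j => ?_)
      rcases le_total j i with h | h
      · rw [hag j h]
      · rw [right_after_nat hd h hi, right_after_nat hyd h (by rw [hag i le_rfl, hi])]
  · rintro x ⟨hx, ⟨i, hi⟩, hd⟩ F
    obtain ⟨M, hM⟩ := hrange F
    obtain ⟨y, hy, ⟨j, hj⟩, hyx⟩ := approx_right hx hi hd M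
    refine ⟨y, hy, ?_, fun t ht => hyx t (hM t ht)⟩
    rintro rfl
    exact hd j hj
  · intro v F
    obtain ⟨M, hM⟩ := hrange F
    obtain ⟨y, hy, hr, hd, hyx⟩ := approx_left (hp v) (fun i => rfl) M
    exact ⟨y, ⟨hy, hr, hd⟩, fun t ht => hyx t (hM t ht)⟩

end PathsNat

section PathsInt
variable {n l : ℕ}

lemma exists_down_int {x : ℤ → ZMod n ⊕ ZMod l} {i j : ℤ} (hij : i ≤ j)
    (hi : (x i).isRight = true) (hj : (x j).isRight = false) : ∃ k, Down x k := by
  induction j, hij using Int.leInduction with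
  | base => simp [hi] at hj
  | succ j hij ih =>
    cases h : (x j).isRight
    · exact ih h
    · exact ⟨j, h, hj⟩

lemma exists_up_int {x : ℤ → ZMod n ⊕ ZMod l} {i j : ℤ} (hij : i ≤ j)
    (hi : (x i).isRight = false) (hj : (x j).isRight = true) : ∃ k, Up x k := by
  induction j, hij using Int.leInduction with
  | base => simp [hi] at hj
  | succ j hij ih =>
    cases h : (x j).isRight
    · exact ⟨j, h, hj⟩
    · exact ih h

lemma Up.lt_of_right {x : ℤ → ZMod n ⊕ ZMod l} (hx : x ∈ PathSet n l ℤ) {i t : ℤ}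
    (h : Up x i) (ht : (x t).isRight = true) : i < t := by
  by_contra hcon
  have hi : (x i).isRight = true := by
    rcases eq_or_lt_of_le (not_lt.1 hcon) with rfl | h1
    · exact ht
    · exact hx.2 t i (i + 1) h1 (by omega) ht h.2
  rw [h.1] at hi
  exact Bool.false_ne_true hi

lemma Down.le_of_right {x : ℤ → ZMod n ⊕ ZMod l} (hx : x ∈ PathSet n l ℤ) {i t : ℤ}
    (h : Down x i) (ht : (x t).isRight = true) : t ≤ i := by
  by_contra hcon
  have hi : (x (i + 1)).isRight = true := by
    rcases eq_or_lt_of_le (show i + 1 ≤ t by omega) with h1 | h1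
    · rwa [h1]
    · exact hx.2 i (i + 1) t (by omega) h1 h.1 ht
  rw [h.2] at hi
  exact Bool.false_ne_true hi

lemma right_iff_up {x : ℤ → ZMod n ⊕ ZMod l} (hx : x ∈ PathSet n l ℤ) {i : ℤ}
    (h : Up x i) (hd : ∀ j, ¬ Down x j) (t : ℤ) : (x t).isRight = true ↔ i < t := by
  refine ⟨h.lt_of_right hx, fun ht => ?_⟩
  by_contra hcon
  rw [Bool.not_eq_true] at hcon
  obtain ⟨k, hk⟩ := exists_down_int (show i + 1 ≤ t by omega) h.2 hcon
  exact hd k hk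

lemma right_iff_down {x : ℤ → ZMod n ⊕ ZMod l} (hx : x ∈ PathSet n l ℤ) {i : ℤ}
    (h : Down x i) (hd : ∀ j, ¬ Up x j) (t : ℤ) : (x t).isRight = true ↔ t ≤ i := by
  refine ⟨h.le_of_right hx, fun ht => ?_⟩
  by_contra hcon
  rw [Bool.not_eq_true] at hcon
  obtain ⟨k, hk⟩ := exists_up_int ht hcon h.1
  exact hd k hk

lemma right_iff_both {x : ℤ → ZMod n ⊕ ZMod l} (hx : x ∈ PathSet n l ℤ) {i j : ℤ}
    (h : Up x i) (hd : Down x j) (t : ℤ) : (x t).isRight = true ↔ i < t ∧ t ≤ j := by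
  refine ⟨fun ht => ⟨h.lt_of_right hx ht, hd.le_of_right hx ht⟩, fun ⟨h1, h2⟩ => ?_⟩
  rcases eq_or_lt_of_le (show i + 1 ≤ t by omega) with rfl | h3
  · exact h.2
  rcases eq_or_lt_of_le h2 with rfl | h4
  · exact hd.1
  · exact hx.2 (i + 1) t j h3 h4 h.2 hd.1

lemma isolated_int {x : ℤ → ZMod n ⊕ ZMod l} (hx : x ∈ PathSet n l ℤ) {i j : ℤ}
    (h : Up x i) (hd : Down x j) : WIso (PathSet n l ℤ) x := by
  classical
  refine ⟨{i, i + 1, j, j + 1}, fun y hy hyx => ?_⟩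
  have hu' : Up y i := by
    rw [Up, hyx i (by simp), hyx (i + 1) (by simp)]
    exact h
  have hd' : Down y j := by
    rw [Down, hyx j (by simp), hyx (j + 1) (by simp)]
    exact hd
  refine path_ext_int hy.1 hx.1 (hyx i (by simp)) fun t => ?_
  rw [Bool.eq_iff_iff, right_iff_both hx h hd, right_iff_both hy hu' hd']

lemma run_right_int {x : ℤ → ZMod n ⊕ ZMod l} (hx : x ∈ PathSet n l ℤ) {i : ℤ}
    {v : ZMod l} (hi : x i = .inr v) (t : ℕ) (h : ∀ s : ℕ, s ≤ t → (x (i + s)).isRight = true) :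
    x (i + t) = .inr (v + t) :=
  run_right (PathSet.half hx i).1 (by simpa [half] using hi) t h

lemma step_run_left (c : ZMod n) (i : ℤ) :
    Step (l := l) (.inl ((i : ZMod n) + c)) (.inl (((i + 1 : ℤ) : ZMod n) + c)) := by
  simp only [Step]
  push_cast
  ring

lemma step_run_right (c : ZMod l) (i : ℤ) :
    Step (n := n) (.inr ((i : ZMod l) + c)) (.inr (((i + 1 : ℤ) : ZMod l) + c)) := by
  simp only [Step]
  push_cast
  ring

/-- A path may be made to leave the second cycle whenever it is at the end of that cycle. -/
lemma splice_down {x : ℤ → ZMod n ⊕ ZMod l} (hx : x ∈ PathSet n l ℤ) {j : ℤ}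
    (hj : x j = .inr (-1)) :
    ∃ y ∈ PathSet n l ℤ, (∀ t ≤ j, y t = x t) ∧ Down y j := by
  have hag : ∀ t ≤ j, (if t ≤ j then x t else
      (.inl ((t : ZMod n) + (-(j + 1))) : ZMod n ⊕ ZMod l)) = x t := fun t ht => if_pos ht
  refine ⟨fun t => if t ≤ j then x t else .inl ((t : ZMod n) + (-(j + 1))), ⟨?_, ?_⟩, hag, ?_⟩
  · refine step_splice_int hx.1 (y := fun t : ℤ => .inl ((t : ZMod n) + (-((j : ZMod n) + 1))))
      (step_run_left _) j ?_
    rw [hj]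
    simp [Step]
  · intro a b k hab hbk ha hk
    have hkj : k ≤ j := by
      by_contra hcon
      simp [hcon] at hk
    simp only [if_pos hkj, if_pos (show a ≤ j by omega), if_pos (show b ≤ j by omega)] at ha hk ⊢
    exact hx.2 a b k hab hbk ha hk
  · simp [Down, hj]

/-- The two-sided paths form a space of type `ω² · (n + l) + 1`: the rank-two points are the
paths inside one of the two cycles, and the rank-one points those with one transition. -/
theorem homeoOrd_pathSet_int [NeZero n] [NeZero l] :
    HomeoOrd (PathSet n l ℤ) (Ordinal.omega0.{u} ^ (2 : Ordinal) * (n + l : ℕ)) := by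
  classical
  have hrange : ∀ F : Finset ℤ, ∃ M : ℕ, ∀ t ∈ F, t.natAbs < M := fun F => by
    obtain ⟨M, hM⟩ := (F.image Int.natAbs).exists_nat_subset_range
    exact ⟨M, fun t ht => Finset.mem_range.1 (hM (Finset.mem_image_of_mem _ ht))⟩
  let p : ZMod n ⊕ ZMod l → ℤ → ZMod n ⊕ ZMod l :=
    Sum.elim (fun v t => .inl (t + v)) (fun v t => .inr (t + v))
  have hp : ∀ v, p v ∈ PathSet n l ℤ := by
    rintro (v | v)
    · exact ⟨step_run_left v, fun i j k _ _ hi _ => by simp [p] at hi⟩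
    · exact ⟨step_run_right v, fun i j k _ _ hi _ => by simp [p]⟩
  have main := homeoOrd_of_windows (τ := ZMod n ⊕ ZMod l) (PathSet n l ℤ) isClosed_pathSet
    p hp ?_
    {x | x ∈ PathSet n l ℤ ∧ (((∃ i, Up x i) ∧ ∀ i, ¬ Down x i) ∨
      ((∃ i, Down x i) ∧ ∀ i, ¬ Up x i))} ?_ ?_ ?_ ?_ ?_ ?_
  · rwa [Fintype.card_sum, ZMod.card, ZMod.card] at main
  · intro a b h
    have h0 : ∀ v, p v 0 = v := by rintro (v | v) <;> simp [p]
    rw [← h0 a, ← h0 b, h]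
  · exact fun x hx => hx.1
  · rintro (v | v) ⟨-, ⟨⟨i, hi⟩, -⟩ | ⟨⟨i, hi⟩, -⟩⟩ <;> simp [p, Up, Down] at hi
  · intro x hx
    by_cases hd : ∃ i, Down x i <;> by_cases hu : ∃ i, Up x i
    · obtain ⟨i, hi⟩ := hd
      obtain ⟨j, hj⟩ := hu
      exact Or.inr (Or.inr (isolated_int hx hj hi))
    · exact Or.inr (Or.inl ⟨hx, Or.inr ⟨hd, by simpa using hu⟩⟩)
    · exact Or.inr (Or.inl ⟨hx, Or.inl ⟨hu, by simpa using hd⟩⟩)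
    · left
      have hside : ∀ i, (x i).isRight = (x 0).isRight := by
        have key : ∀ i j, i ≤ j → (x i).isRight = (x j).isRight := by
          intro i j hij
          cases hi : (x i).isRight <;> cases hj : (x j).isRight
          · rfl
          · exact absurd (exists_up_int hij hi hj) hu
          · exact absurd (exists_down_int hij hi hj) hd
          · rfl
        intro i
        rcases le_total i 0 with h | h
        · exact key i 0 h
        · exact (key 0 i h).symm
      cases h0 : x 0 with
      | inl v =>
        refine ⟨.inl v, path_ext_int (hp _).1 hx.1 (i := 0) (by simp [p, h0]) fun t => ?_⟩
        rw [hside t, h0]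
        rfl
      | inr v =>
        refine ⟨.inr v, path_ext_int (hp _).1 hx.1 (i := 0) (by simp [p, h0]) fun t => ?_⟩
        rw [hside t, h0]
        rfl
  · rintro x ⟨hx, ⟨⟨i, hi⟩, hd⟩ | ⟨⟨i, hi⟩, hd⟩⟩
    · refine ⟨{i, i + 1}, fun y hy hyx => ?_⟩
      have hi' : Up y i := by
        rw [Up, hyx i (by simp), hyx (i + 1) (by simp)]
        exact hi
      by_cases hyd : ∃ j, Down y j
      · obtain ⟨j, hj⟩ := hyd
        exact Or.inr (isolated_int hy hi' hj)
      · push Not at hyd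
        refine Or.inl (path_ext_int hy.1 hx.1 (hyx i (by simp)) fun t => ?_)
        rw [Bool.eq_iff_iff, right_iff_up hx hi hd, right_iff_up hy hi' hyd]
    · refine ⟨{i, i + 1}, fun y hy hyx => ?_⟩
      have hi' : Down y i := by
        rw [Down, hyx i (by simp), hyx (i + 1) (by simp)]
        exact hi
      by_cases hyd : ∃ j, Up y j
      · obtain ⟨j, hj⟩ := hyd
        exact Or.inr (isolated_int hy hj hi')
      · push Not at hyd
        refine Or.inl (path_ext_int hy.1 hx.1 (hyx i (by simp)) fun t => ?_)
        rw [Bool.eq_iff_iff, right_iff_down hx hi hd, right_iff_down hy hi' hyd]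
  · rintro x ⟨hx, ⟨⟨i, hi⟩, hd⟩ | ⟨⟨i, hi⟩, hd⟩⟩ F
    · obtain ⟨M, hM⟩ := hrange F
      obtain ⟨t, htM, ht⟩ := exists_nat_cast_eq (-1 : ZMod l) (M + i.natAbs + 1)
      have hxj : x (i + 1 + t) = .inr (-1) := by
        rw [run_right_int hx (hi.eq hx.1).2 t fun s _ =>
          (right_iff_up hx hi hd _).2 (by omega), ht, zero_add]
      obtain ⟨y, hy, hyx, hyd⟩ := splice_down hx hxj
      refine ⟨y, hy, ?_, fun s hs => hyx s ?_⟩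
      · rintro rfl
        exact hd _ hyd
      · have := hM s hs
        omega
    · obtain ⟨M, hM⟩ := hrange F
      obtain ⟨t, htM, ht⟩ := exists_nat_cast_eq (-1 : ZMod l) (M + i.natAbs + 1)
      obtain ⟨j, hj⟩ : ∃ j, j = i - t := ⟨_, rfl⟩
      have hxj : x j = .inr 0 := by
        obtain ⟨v, hv⟩ := Sum.isRight_iff.1 ((right_iff_down hx hi hd j).2 (by omega))
        have h1 := run_right_int hx hv t fun s _ => (right_iff_down hx hi hd _).2 (by omega)
        rw [show j + t = i by omega, (hi.eq hx.1).1, ht] at h1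
        have h2 := Sum.inr.inj h1
        rw [hv]
        congr 1
        linear_combination -h2
      have hag : ∀ t, j ≤ t → (if t ≤ j - 1 then
          (.inl ((t : ZMod n) + (-j)) : ZMod n ⊕ ZMod l) else x t) = x t :=
        fun t ht => if_neg (by omega)
      refine ⟨fun t => if t ≤ j - 1 then .inl ((t : ZMod n) + (-j)) else x t, ⟨?_, ?_⟩, ?_, ?_⟩
      · refine step_splice_int (x := fun t : ℤ => .inl ((t : ZMod n) + (-(j : ZMod n))))
          (step_run_left _) hx.1 (j - 1) ?_
        rw [sub_add_cancel, hxj]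
        simp only [Step]
        refine ⟨?_, trivial⟩
        push_cast
        ring
      · intro a b k hab hbk ha hk
        have haj : j ≤ a := by
          by_contra hcon
          simp [show a ≤ j - 1 by omega] at ha
        simp only [hag a haj] at ha
        simp only [hag k (by omega)] at hk
        simp only [hag b (by omega)]
        exact hx.2 a b k hab hbk ha hk
      · intro h
        have h1 := congrArg Sum.isRight (congrFun h (j - 1))
        have h2 := (right_iff_down hx hi hd (j - 1)).2 (by omega)
        simp only [le_refl, if_true, h2] at h1
        exact Bool.false_ne_true h1
      · intro s hs
        have := hM s hs
        exact hag s (by omega)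
  · rintro (v | v) F
    · obtain ⟨M, hM⟩ := hrange F
      obtain ⟨j, hjM, hj⟩ := exists_nat_cast_eq (-1 - v) M
      have hR : ∀ t : ℤ, ((if t ≤ j then p (.inl v) t else
          (.inr ((t : ZMod l) + (-(j + 1))) : ZMod n ⊕ ZMod l)).isRight = true ↔ j < t) := by
        intro t
        split_ifs with ht
        · simpa [p] using ht
        · simpa using ht
      refine ⟨fun t => if t ≤ j then p (.inl v) t else .inr ((t : ZMod l) + (-(j + 1))),
        ⟨⟨?_, ?_⟩, Or.inl ⟨⟨j, ?_, ?_⟩, ?_⟩⟩, ?_⟩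
      · refine step_splice_int (hp (.inl v)).1
          (y := fun t : ℤ => .inr ((t : ZMod l) + (-((j : ZMod l) + 1)))) (step_run_right _) j ?_
        simp [p, hj, Step]
      · intro a b k hab hbk ha hk
        rw [hR] at ha hk
        simp only [hR]
        omega
      · rw [← Bool.not_eq_true, hR]
        omega
      · rw [hR]
        omega
      · rintro i ⟨h1, h2⟩
        rw [hR] at h1
        rw [← Bool.not_eq_true, hR] at h2
        omega
      · intro t ht
        have := hM t ht
        exact if_pos (by omega)
    · obtain ⟨M, hM⟩ := hrange F
      obtain ⟨j, hjM, hj⟩ := exists_nat_cast_eq (-1 - v) M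
      obtain ⟨y, hy, hyx, hyd⟩ := splice_down (hp (.inr v)) (j := j) (by simp [p, hj])
      refine ⟨y, ⟨hy, Or.inr ⟨⟨j, hyd⟩, fun i hi => ?_⟩⟩, fun t ht => hyx t ?_⟩
      · have h1 := (right_iff_both hy hi hyd j).1 hyd.1
        have h2 := hi.1
        rw [hyx i h1.1.le] at h2
        simp [p] at h2
      · have := hM t ht
        omega

end PathsInt

section Realize
variable {n l : ℕ}

/-- The path that makes a single excursion, of length `L`, into the second cycle. -/
def excursion (n l L : ℕ) (p : ℤ) : ZMod n ⊕ ZMod l :=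
  if p < 0 then .inl p else if p < L then .inr p else .inl (p - L : ℤ)

lemma excursion_right_iff (L : ℕ) (p : ℤ) :
    (excursion n l L p).isRight = true ↔ 0 ≤ p ∧ p < L := by
  unfold excursion
  split_ifs with h1 h2
  · simp
    omega
  · simp
    omega
  · simp
    omega

lemma excursion_mem {L : ℕ} (hL : 0 < L) (hd : (L : ZMod l) = 0) :
    excursion n l L ∈ PathSet n l ℤ := by
  refine ⟨fun p => ?_, fun a b k hab hbk ha hk => ?_⟩
  · rcases lt_trichotomy p (-1) with h | rfl | h
    · rw [excursion, excursion, if_pos (by omega), if_pos (by omega)]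
      simp [Step]
    · rw [excursion, excursion, if_pos (by omega), if_neg (by omega), if_pos (by omega)]
      simp [Step]
    rcases lt_trichotomy p (L - 1) with h' | rfl | h'
    · rw [excursion, excursion, if_neg (by omega), if_pos (by omega), if_neg (by omega),
        if_pos (by omega)]
      simp [Step]
    · rw [excursion, excursion, if_neg (by omega), if_pos (by omega), if_neg (by omega),
        if_neg (by omega)]
      simp [Step, hd]
    · rw [excursion, excursion, if_neg (by omega), if_neg (by omega), if_neg (by omega),
        if_neg (by omega)]
      simp only [Step]
      push_cast
      ring
  · rw [excursion_right_iff] at ha hk ⊢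
    omega

/-- A one-sided path that finally leaves the second cycle is a tail of an excursion. -/
lemma exists_excursion [NeZero l] {x : ℕ → ZMod n ⊕ ZMod l} (hx : x ∈ PathSet n l ℕ) {j : ℕ}
    (hj : Down x j) : ∃ (k : ℕ) (p : ℤ), ∀ t : ℕ, excursion n l (l * (k + 1)) (p + t) = x t := by
  have hl : 0 < l := NeZero.pos l
  have hLpos : ∀ k, 0 < l * (k + 1) := fun k => Nat.mul_pos hl (by omega)
  have hE : ∀ k, excursion n l (l * (k + 1)) ∈ PathSet n l ℤ :=
    fun k => excursion_mem (hLpos k) (by simp)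
  have hjright : ∀ {i t : ℕ}, (x i).isRight = true → i ≤ t → t ≤ j → (x t).isRight = true := by
    intro i t hi h1 h2
    rcases eq_or_lt_of_le h1 with rfl | h1
    · exact hi
    rcases eq_or_lt_of_le h2 with rfl | h2
    · exact hj.1
    exact hx.2 i t j h1 h2 hi hj.1
  cases h0 : (x 0).isRight
  · obtain ⟨i, -, hij, hi⟩ := exists_up_nat (Nat.zero_le j) h0 hj.1
    have hx0 := (hi.eq hx.1).2
    have hrun := run_right_from hx.1 hx0 (j - (i + 1)) fun s hs =>
      hjright hi.2 (by omega) (by omega)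
    rw [show i + 1 + (j - (i + 1)) = j by omega, (hj.eq hx.1).1] at hrun
    have hd : l ∣ j - i := by
      rw [← ZMod.natCast_eq_zero_iff, show j - i = (j - (i + 1)) + 1 by omega, Nat.cast_add]
      have := Sum.inr.inj hrun
      push_cast
      linear_combination -this
    obtain ⟨k, hk⟩ := hd
    obtain ⟨k, rfl⟩ : ∃ k', k = k' + 1 := ⟨k - 1, by
      have : k ≠ 0 := by
        rintro rfl
        omega
      omega⟩
    refine ⟨k, -(i + 1 : ℕ), fun t => congrFun (path_ext_nat (PathSet.half (hE k) _).1 hx.1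
      (i := i + 1) ?_ fun t => ?_) t⟩
    · rw [hx0, half, neg_add_cancel, excursion, if_neg (by omega),
        if_pos (by exact_mod_cast hLpos k)]
      simp
    · rw [Bool.eq_iff_iff, half, excursion_right_iff, ← hk]
      constructor
      · intro h
        exact hjright hi.2 (by omega) (by omega)
      · intro h
        have h1 : ¬ j < t := fun h1 => by
          rw [hj.left_after hx h1] at h
          exact Bool.false_ne_true h
        have h2 : ¬ t ≤ i := fun h2 => by
          have h3 : (x i).isRight = true := by
            rcases eq_or_lt_of_le h2 with rfl | h2
            · exact h
            · exact hx.2 t i (i + 1) h2 (by omega) h hi.2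
          rw [hi.1] at h3
          exact Bool.false_ne_true h3
        omega
  · have hk : j + 1 ≤ l * (j + 1) := by
      have := Nat.mul_le_mul_right (j + 1) hl
      omega
    refine ⟨j, ((l * (j + 1) : ℕ) : ℤ) - (j + 1 : ℕ), fun t => congrFun (path_ext_nat
      (PathSet.half (hE j) _).1 hx.1 (i := j + 1) ?_ fun t => ?_) t⟩
    · rw [(hj.eq hx.1).2, half, sub_add_cancel, excursion, if_neg (by omega), if_neg (by omega)]
      simp
    · rw [Bool.eq_iff_iff, half, excursion_right_iff]
      constructor
      · intro h
        exact hjright h0 (by omega) (by omega)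
      · intro h
        have h1 : ¬ j < t := fun h1 => by
          rw [hj.left_after hx h1] at h
          exact Bool.false_ne_true h
        omega

lemma eventually_run {x : ℕ → ZMod n ⊕ ZMod l} (hx : x ∈ PathSet n l ℕ) :
    ∃ N, ∀ M ≥ N, (∃ v, x M = .inl v ∧ ∀ t : ℕ, x (M + t) = .inl (v + t)) ∨
      (∃ v, x M = .inr v ∧ ∀ t : ℕ, x (M + t) = .inr (v + t)) := by
  have key : ∃ N, (∀ t ≥ N, (x t).isRight = false) ∨ (∀ t ≥ N, (x t).isRight = true) := by
    by_cases hd : ∃ i, Down x i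
    · obtain ⟨i, hi⟩ := hd
      exact ⟨i + 1, Or.inl fun t ht => hi.left_after hx ht⟩
    push Not at hd
    by_cases hr : ∃ i, (x i).isRight = true
    · obtain ⟨i, hi⟩ := hr
      exact ⟨i, Or.inr fun t ht => right_after_nat hd ht hi⟩
    · push Not at hr
      exact ⟨0, Or.inl fun t _ => by simpa using hr t⟩
  obtain ⟨N, h | h⟩ := key
  · refine ⟨N, fun M hM => Or.inl ?_⟩
    cases hv : x M with
    | inl v => exact ⟨v, rfl, fun t => run_left_from hx.1 hv t fun s _ => h _ (by omega)⟩
    | inr v => simpa [hv] using h M hM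
  · refine ⟨N, fun M hM => Or.inr ?_⟩
    obtain ⟨v, hv⟩ := Sum.isRight_iff.1 (h M hM)
    exact ⟨v, hv, fun t => run_right_from hx.1 hv t fun s _ => h _ (by omega)⟩

/-- Sufficient conditions on a binary labelling of the two cycles for the paths to be determined
by their labels and to be realizable: the labels at the ends of the cycles differ, no two states
start the same infinite run of labels, and four consecutive labels are not all zero. -/
theorem exists_of_labels [NeZero n] [NeZero l] (A : ZMod n → Bool) (B : ZMod l → Bool)
    (hend : A (-1) ≠ B (-1))
    (hA : ∀ u v, (∀ t : ℕ, A (u + t) = A (v + t)) → u = v)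
    (hB : ∀ u v, (∀ t : ℕ, B (u + t) = B (v + t)) → u = v)
    (hAB : ∀ u v, ¬ ∀ t : ℕ, A (u + t) = B (v + t))
    (hnz : ∀ a b c d, Step a b → Step b c → Step c d →
      Sum.elim A B a = true ∨ Sum.elim A B b = true ∨ Sum.elim A B c = true ∨
        Sum.elim A B d = true) :
    ∃ (f : unitI → unitI) (c : unitI), Unimodal f c ∧ LEO f ∧
      HomeoOrd (omegaLimitSet f c) (Ordinal.omega0.{u} ^ (2 : Ordinal) * n) ∧
      HomeoOrd (Inhom f c) (Ordinal.omega0.{v} ^ (2 : Ordinal) * (n + l : ℕ)) := by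
  have hL : ∀ k, 0 < l * (k + 1) := fun k => Nat.mul_pos (NeZero.pos l) (by omega)
  have hE : ∀ k, excursion n l (l * (k + 1)) ∈ PathSet n l ℤ :=
    fun k => excursion_mem (hL k) (by simp)
  have main := exists_unimodal_of_dense (n := n) (NeZero.pos n)
    (fun p : ℤ => (.inl p : ZMod n ⊕ ZMod l)) (by simp)
    (fun k => excursion n l (l * (k + 1))) (fun k => l * (k + 1)) ?_ ?_
    (PathSet n l ℕ) isClosed_pathSet ?_ ?_ (Sum.elim A B) ?_ ?_
  · obtain ⟨f, c, h1, h2, ⟨h3⟩, ⟨h4⟩⟩ := main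
    rw [Bi_pathSet] at h4
    obtain ⟨g⟩ := homeoOrd_pathSet_nat.{u} (n := n) (l := l)
    obtain ⟨g'⟩ := homeoOrd_pathSet_int.{v} (n := n) (l := l)
    exact ⟨f, c, h1, h2, ⟨h3.symm.trans g⟩, ⟨h4.symm.trans g'⟩⟩
  · intro k p hp
    exact if_pos hp
  · intro k p hp
    have := hL k
    simp only [excursion]
    rw [if_neg (by omega), if_neg (by omega)]
  · exact fun k p => PathSet.half (hE k) p
  · intro x hx M
    obtain ⟨y, hy, ⟨j, hj⟩, hyx⟩ := approx_down hx M
    obtain ⟨k, p, h⟩ := exists_excursion hy hj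
    exact ⟨k, p, fun t ht => (h t).trans (hyx t ht)⟩
  · intro k p
    have h := (PathSet.half (hE k) p).1
    rcases hnz _ _ _ _ (h 0) (h 1) (h 2) with h | h | h | h
    · exact ⟨0, by omega, h⟩
    · exact ⟨1, by omega, h⟩
    · exact ⟨2, by omega, h⟩
    · exact ⟨3, by omega, h⟩
  · intro x hx y hy hxy
    have htail : ∃ N, ∀ M ≥ N, x M = y M := by
      obtain ⟨N, hN⟩ := eventually_run hx
      obtain ⟨N', hN'⟩ := eventually_run hy
      refine ⟨max N N', fun M hM => ?_⟩
      rcases hN M ((le_max_left _ _).trans hM) with ⟨u, hu, hxu⟩ | ⟨u, hu, hxu⟩ <;>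
        rcases hN' M ((le_max_right _ _).trans hM) with ⟨v, hv, hyv⟩ | ⟨v, hv, hyv⟩
      · rw [hu, hv, hA u v fun t => by simpa [hxu, hyv] using hxy (M + t)]
      · exact absurd (fun t => by simpa [hxu, hyv] using hxy (M + t)) (hAB u v)
      · exact absurd (fun t => by simpa [hxu, hyv] using (hxy (M + t)).symm) (hAB v u)
      · rw [hu, hv, hB u v fun t => by simpa [hxu, hyv] using hxy (M + t)]
    -- predecessors in different cycles carry different labels
    have hback : ∀ i, x (i + 1) = y (i + 1) → x i = y i := by
      intro i h
      have h1 := hx.1 i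
      have h2 := hy.1 i
      have h3 := hxy i
      rw [h] at h1
      by_cases hs : (x i).isRight = (y i).isRight
      · exact step_left_unique h1 h2 hs
      · exfalso
        cases hxi : x i with
        | inl u =>
          cases hyi : y i with
          | inl v => simp [hxi, hyi] at hs
          | inr v =>
            rw [hxi] at h1 h3
            rw [hyi] at h2 h3
            cases hz : y (i + 1) with
            | inl z =>
              rw [hz] at h1 h2
              simp only [Step] at h1 h2
              rw [eq_neg_of_add_eq_zero_left h2.1,
                eq_neg_of_add_eq_zero_left (h1.symm.trans h2.2)] at h3
              exact hend h3
            | inr z =>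
              rw [hz] at h1 h2
              simp only [Step] at h1 h2
              rw [eq_neg_of_add_eq_zero_left h1.1,
                eq_neg_of_add_eq_zero_left (h2.symm.trans h1.2)] at h3
              exact hend h3
        | inr u =>
          cases hyi : y i with
          | inr v => simp [hxi, hyi] at hs
          | inl v =>
            rw [hxi] at h1 h3
            rw [hyi] at h2 h3
            cases hz : y (i + 1) with
            | inl z =>
              rw [hz] at h1 h2
              simp only [Step] at h1 h2
              rw [eq_neg_of_add_eq_zero_left h1.1,
                eq_neg_of_add_eq_zero_left (h2.symm.trans h1.2)] at h3
              exact hend h3.symm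
            | inr z =>
              rw [hz] at h1 h2
              simp only [Step] at h1 h2
              rw [eq_neg_of_add_eq_zero_left h2.1,
                eq_neg_of_add_eq_zero_left (h1.symm.trans h2.2)] at h3
              exact hend h3.symm
    obtain ⟨N, hN⟩ := htail
    have hdesc : ∀ d i, x (i + d) = y (i + d) → x i = y i := by
      intro d
      induction d with
      | zero => exact fun i h => h
      | succ d ih => exact fun i h => ih i (hback _ h)
    funext i
    exact hdesc N i (hN _ (by omega))

end Realize

section Labels

lemma exists_run_to {n : ℕ} [NeZero n] (v a : ZMod n) : ∃ t : ℕ, v + t = a := by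
  obtain ⟨t, -, ht⟩ := exists_nat_cast_eq (a - v) 0
  exact ⟨t, by rw [ht]; ring⟩

lemma eq_of_runs {n : ℕ} [NeZero n] {a u v : ZMod n}
    (h : ∀ t : ℕ, decide (u + t ≠ a) = decide (v + t ≠ a)) : u = v := by
  obtain ⟨t, ht⟩ := exists_run_to u a
  have h1 := h t
  rw [ht] at h1
  simp only [ne_eq, not_true_eq_false, decide_false, Bool.false_eq, decide_eq_false_iff_not,
    not_not] at h1
  exact add_right_cancel (ht.trans h1.symm)

lemma dvd_of_runs {n l : ℕ} [NeZero n] {a u : ZMod n} {b v : ZMod l}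
    (h : ∀ t : ℕ, u + t = a ↔ v + t = b) : l ∣ n := by
  obtain ⟨t, ht⟩ := exists_run_to u a
  have h1 := (h t).1 ht
  have h2 := (h (t + n)).1 (by simpa using ht)
  rw [← ZMod.natCast_eq_zero_iff]
  push_cast at h2
  linear_combination h2 - h1

/-- The case of different multiplicities. -/
theorem exists_different (n l : ℕ) (hn : 0 < n) (hl : 0 < l) (h1 : ¬ (n = 1 ∧ l = 1))
    (h2 : ¬ (n = 2 ∧ l = 2)) :
    ∃ (f : unitI → unitI) (c : unitI), Unimodal f c ∧ LEO f ∧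
      HomeoOrd (omegaLimitSet f c) (Ordinal.omega0.{u} ^ (2 : Ordinal) * n) ∧
      HomeoOrd (Inhom f c) (Ordinal.omega0.{v} ^ (2 : Ordinal) * (n + l : ℕ)) := by
  have : NeZero n := ⟨hn.ne'⟩
  have : NeZero l := ⟨hl.ne'⟩
  have hone : ∀ {k : ℕ}, 2 ≤ k → (1 : ZMod k) ≠ 0 := by
    intro k hk
    have : Fact (1 < k) := ⟨hk⟩
    exact one_ne_zero
  have hneg : ∀ {k : ℕ}, 2 ≤ k → (0 : ZMod k) ≠ -1 := fun hk h =>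
    hone hk (by linear_combination h)
  by_cases hl1 : l = 1
  · -- the labels `1 … 1 0` on the first cycle and `1` on the second
    subst hl1
    have hn2 : 2 ≤ n := by omega
    refine exists_of_labels (fun i => decide (i ≠ -1)) (fun _ => true) (by simp)
      (fun u v h => eq_of_runs h) (fun u v _ => Subsingleton.elim _ _) ?_ ?_
    · intro u v h
      obtain ⟨t, ht⟩ := exists_run_to u (-1)
      simpa [ht] using h t
    · rintro (a | a) (b | b) c d hab - -
      · by_cases ha : a = -1
        · subst ha
          right
          left
          simp only [Step, neg_add_cancel] at hab
          simp [hab, hneg hn2]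
        · simp [ha]
      · simp
      · simp
      · simp
  by_cases hn1 : n = 1
  · -- the label `1` on the first cycle and the labels `1 … 1 0` on the second
    subst hn1
    have hl2 : 2 ≤ l := by omega
    refine exists_of_labels (fun _ => true) (fun j => decide (j ≠ -1)) (by simp)
      (fun u v _ => Subsingleton.elim _ _) (fun u v h => eq_of_runs h) ?_ ?_
    · intro u v h
      obtain ⟨t, ht⟩ := exists_run_to v (-1)
      simpa [ht] using h t
    · rintro (a | a) (b | b) c d hab - -
      · simp
      · simp
      · simp
      · by_cases ha : a = -1
        · subst ha
          right
          left
          simp only [Step, neg_add_cancel] at hab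
          simp [hab, hneg hl2]
        · simp [ha]
  have hn2 : 2 ≤ n := by omega
  have hl2 : 2 ≤ l := by omega
  have hright : ∀ {b : ZMod n ⊕ ZMod l}, Step (.inl 0) b → b = .inl 1 := by
    rintro (b | b) h
    · simp only [Step, zero_add] at h
      rw [h]
    · simp only [Step, zero_add] at h
      exact absurd h.1 (hone hn2)
  by_cases hln : l = n
  · -- the labels `0 1 … 1` on the first cycle and `1 … 1 0 0` on the second
    subst hln
    have hl3 : 3 ≤ l := by omega
    have htwo : (2 : ZMod l) ≠ 0 := by
      intro h
      have : ((2 : ℕ) : ZMod l) = 0 := by exact_mod_cast h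
      rw [ZMod.natCast_eq_zero_iff] at this
      exact absurd (Nat.le_of_dvd (by omega) this) (by omega)
    refine exists_of_labels (fun i => decide (i ≠ 0)) (fun j => decide (j ≠ -1 ∧ j ≠ -2))
      (by simp [hone hl2]) (fun u v h => eq_of_runs h) ?_ ?_ ?_
    · intro u v h
      obtain ⟨t, ht⟩ := exists_run_to u (-2)
      have h' : ∀ t : ℕ, (u + t = -1 ∨ u + t = -2) ↔ (v + t = -1 ∨ v + t = -2) := by
        intro t
        have := h t
        rw [decide_eq_decide] at this
        tauto
      rcases (h' t).1 (Or.inr ht) with e1 | e1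
      · exfalso
        have e2 := (h' (t + 1)).1 (Or.inl (by push_cast; linear_combination ht))
        push_cast at e2
        rcases e2 with e2 | e2
        · exact hone hl2 (by linear_combination e2 - e1)
        · exact htwo (by linear_combination e2 - e1)
      · exact add_right_cancel (ht.trans e1.symm)
    · intro u v h
      obtain ⟨t, ht⟩ := exists_run_to v (-2)
      have e1 := h t
      have e2 := h (t + 1)
      have e3 : v + ((t + 1 : ℕ) : ZMod l) = -1 := by
        push_cast
        linear_combination ht
      rw [ht] at e1
      rw [e3] at e2
      simp at e1 e2
      exact hone hl2 (by linear_combination e2 - e1)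
    · intro a b c d hab hbc hcd
      have hzero : ∀ {s t : ZMod l ⊕ ZMod l}, s = .inr (-1) → Step s t →
          t = .inr 0 ∨ t = .inl 0 := by
        rintro s (t | t) rfl h
        · exact Or.inr (by rw [h.2])
        · simp only [Step, neg_add_cancel] at h
          exact Or.inl (by rw [h])
      have h0 : (0 : ZMod l) ≠ -2 := fun h => htwo (by linear_combination h)
      -- a run of zeros is contained in `inr (-2), inr (-1), inl 0`
      have hm1 : ∀ {s t r : ZMod l ⊕ ZMod l}, s = .inr (-1) → Step s t → Step t r →
          Sum.elim (fun i : ZMod l => decide (i ≠ 0))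
            (fun j : ZMod l => decide (j ≠ -1 ∧ j ≠ -2)) t = true ∨
          Sum.elim (fun i : ZMod l => decide (i ≠ 0))
            (fun j : ZMod l => decide (j ≠ -1 ∧ j ≠ -2)) r = true := by
        intro s t r hs hst htr
        rcases hzero hs hst with rfl | rfl
        · simp [hneg hl2, h0]
        · rw [hright htr]
          simp [hone hl2]
      rcases a with a | a
      · by_cases ha : a = 0
        · subst ha
          rw [hright hab]
          simp [hone hl2]
        · simp [ha]
      · by_cases ha : a = -1
        · rcases hm1 (by rw [ha]) hab hbc with h | h
          · exact Or.inr (Or.inl h)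
          · exact Or.inr (Or.inr (Or.inl h))
        by_cases ha2 : a = -2
        · have hb : b = .inr (-1) := by
            subst ha2
            rcases b with b | b
            · exact absurd hab.1 fun h => hone hl2 (by linear_combination -h)
            · simp only [Step] at hab
              rw [hab]
              congr 1
              ring
          rcases hm1 hb hbc hcd with h | h
          · exact Or.inr (Or.inr (Or.inl h))
          · exact Or.inr (Or.inr (Or.inr h))
        · simp [ha, ha2]
  · -- the labels `0 1 … 1` on the first cycle and `1 … 1 0` on the second
    refine exists_of_labels (fun i => decide (i ≠ 0)) (fun j => decide (j ≠ -1))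
      (by simp [hone hn2]) (fun u v h => eq_of_runs h) (fun u v h => eq_of_runs h) ?_ ?_
    · intro u v h
      have h' : ∀ t : ℕ, u + t = 0 ↔ v + t = -1 := by
        intro t
        have := h t
        rw [decide_eq_decide] at this
        exact not_iff_not.1 this
      exact hln (Nat.dvd_antisymm (dvd_of_runs h') (dvd_of_runs fun t => (h' t).symm))
    · intro a b c d hab hbc hcd
      rcases a with a | a
      · by_cases ha : a = 0
        · subst ha
          rw [hright hab]
          simp [hone hn2]
        · simp [ha]
      · by_cases ha : a = -1
        · subst ha
          rcases b with b | b
          · obtain ⟨-, rfl⟩ := hab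
            rw [hright hbc]
            simp [hone hn2]
          · simp only [Step, neg_add_cancel] at hab
            subst hab
            simp [hneg hl2]
        · simp [ha]

end Labels

theorem stmt4 (n m : ℕ) (hn : 0 < n) (hm : 0 < m)
    (h : (n = 1 ∧ m ≠ 2) ∨ (n = 2 ∧ 2 ≤ m ∧ m ≠ 4) ∨ (2 < n ∧ n ≤ m)) :
    ∃ (f : unitI → unitI) (c : unitI),
      Unimodal f c ∧ LEO f ∧
      HomeoOrd (omegaLimitSet f c) (Ordinal.omega0 ^ (2 : Ordinal) * n) ∧
      HomeoOrd (Inhom f c) (Ordinal.omega0 ^ (2 : Ordinal) * m) := by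
  by_cases hmn : m = n
  · subst hmn
    exact exists_equal m hm
  · have key := exists_different n (m - n) hn (by omega) (by omega) (by omega)
    rwa [show n + (m - n) = m by omega] at key

end
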